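/- arXiv:2101.09386 — 2 statements merged into one kernel-verified Lean document; each statement's English description precedes it below -/
import Mathlib

section
/- Let K be a field of positive characteristic, n ≥ 1, and let Γ be a finitely generated subgroup of GL_n(K) all of whose elements are semi-simple (an anisotropic linear group). If there exist finitely many abelian subgroups A₁, …, A_k of Γ such that every element of Γ can be written as a product a₁⋯a_k with a_i ∈ A_i, then Γ is virtually abelian. -/
open Matrix

/-- An element of `GL n K` is semi-simple if the corresponding linear endomorphism
of `K^n` is a semisimple endomorphism. -/
def IsSemisimpleElt {n : ℕ} {K : Type*} [Field K] (g : GL (Fin n) K) : Prop :=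
  Module.End.IsSemisimple ((g : Matrix (Fin n) (Fin n) K).mulVecLin)

/-- A group is virtually abelian if it has an abelian subgroup of finite index. -/
def IsVirtuallyAbelian (G : Type*) [Group G] : Prop :=
  ∃ H : Subgroup G, H.FiniteIndex ∧ ∀ x y : ↥H, x * y = y * x

set_option linter.style.haveILetI false


lemma alg_pow_eq (p : ℕ) [Fact p.Prime] {F : Type*} [Field F] [Algebra (ZMod p) F] (s : F)
    (hs : IsIntegral (ZMod p) s) : ∃ k : ℕ, 0 < k ∧ s ^ (p ^ k) = s := by
  have := IntermediateField.adjoin.finiteDimensional hs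
  let L := IntermediateField.adjoin (ZMod p) {s}
  haveI : Finite L := Module.finite_of_finite (ZMod p)
  letI : Fintype L := Fintype.ofFinite L
  haveI : CharP L p := charP_of_injective_algebraMap (algebraMap (ZMod p) L).injective p
  obtain ⟨n, hn, h⟩ := FiniteField.card L p
  refine ⟨n, n.pos, ?_⟩
  have := FiniteField.pow_card (⟨s, IntermediateField.mem_adjoin_simple_self _ s⟩ : L)
  rw [h] at this
  exact congrArg Subtype.val this

lemma multiset_prod_norm_lt {F : Type*} [NormedField F] (S : Multiset F)
    (h : ‖S.prod‖ < 1) : ∃ x ∈ S, ‖x‖ < 1 := by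
  induction S using Multiset.induction with
  | empty => simp at h
  | cons a S ih =>
    by_cases ha : ‖a‖ < 1
    · exact ⟨a, by simp, ha⟩
    · rw [Multiset.prod_cons, norm_mul] at h
      obtain ⟨x, hx, hx'⟩ := ih (by nlinarith [norm_nonneg S.prod])
      exact ⟨x, by simp [hx], hx'⟩

open PowerSeries LaurentSeries in
theorem normed_field_exists (p : ℕ) [Fact p.Prime] :
    ∃ (F : Type) (_ : NormedField F) (_ : IsUltrametricDist F) (_ : IsAlgClosed F) (_ : CharP F p)
      (ι : PowerSeries (ZMod p) →+* F) (c : ℝ), 0 < c ∧ c < 1 ∧ ‖ι PowerSeries.X‖ = c ∧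
      (∀ f, ‖ι f‖ ≤ 1) ∧ 
      (∀ x : F, ‖x‖ ≤ 1 → ∃ s : F, (∃ k : ℕ, 0 < k ∧ s ^ (p ^ k) = s) ∧ ‖x - s‖ < 1) := by
  let E := LaurentSeries (ZMod p)
  have hXval : (Valued.v : Valuation E (WithZero (Multiplicative ℤ))) ((PowerSeries.X : PowerSeries (ZMod p)) : E) = WithZero.exp (-1 : ℤ) := by
    simpa using valuation_X_pow (ZMod p) 1
  haveI : (Valued.v : Valuation E (WithZero (Multiplicative ℤ))).IsNontrivial := 
    ⟨⟨((PowerSeries.X : PowerSeries (ZMod p)) : E), by rw [hXval]; simp, by rw [hXval]; decide⟩⟩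
  haveI : MulArchimedean (MonoidWithZeroHom.ValueGroup₀ (.ofClass (Valued.v : Valuation E (WithZero (Multiplicative ℤ))))) := 
    MulArchimedean.comap (MonoidWithZeroHom.ValueGroup₀.embedding).toMonoidHom MonoidWithZeroHom.ValueGroup₀.embedding_strictMono
  letI rk : (Valued.v : Valuation E (WithZero (Multiplicative ℤ))).RankOne := 
    (Valuation.nonempty_rankOne_iff_mulArchimedean.2 inferInstance).some
  letI nf : NormedField E := Valued.toNormedField E (WithZero (Multiplicative ℤ))
  have hle1 : ∀ x : E, ‖x‖ ≤ 1 ↔ (Valued.v : Valuation E (WithZero (Multiplicative ℤ))) x ≤ 1 := by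
    intro x; exact Valued.toNormedField.norm_le_one_iff
  have hlt1 : ∀ x : E, ‖x‖ < 1 ↔ (Valued.v : Valuation E (WithZero (Multiplicative ℤ))) x < 1 := by
    intro x; exact Valued.toNormedField.norm_lt_one_iff
  have hXlt : ‖((PowerSeries.X : PowerSeries (ZMod p)) : E)‖ < 1 := by
    rw [hlt1, hXval]; decide
  have hXpos : 0 < ‖((PowerSeries.X : PowerSeries (ZMod p)) : E)‖ := by
    rw [norm_pos_iff]; intro h; rw [h, map_zero] at hXval; exact WithZero.exp_ne_zero hXval.symm
  have hO : ∀ x : E, ‖x‖ ≤ 1 ↔ ∃ f : PowerSeries (ZMod p), (f : E) = x := by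
    intro x; rw [hle1]; exact val_le_one_iff_eq_coe (ZMod p) x
  haveI : IsUltrametricDist E := inferInstance
  letI nnf : NontriviallyNormedField E := { nf with
    non_trivial := ⟨((PowerSeries.X : PowerSeries (ZMod p)) : E)⁻¹, by
      rw [norm_inv]; exact (one_lt_inv₀ hXpos).2 hXlt⟩ }
  haveI : CompleteSpace E := instLaurentSeriesComplete
  let F := AlgebraicClosure E
  letI nF : NormedField F := spectralNorm.normedField E F
  have hext : ∀ x : E, ‖algebraMap E F x‖ = ‖x‖ := fun x => spectralNorm_extends x
  haveI hult : IsUltrametricDist F := IsUltrametricDist.isUltrametricDist_of_isNonarchimedean_norm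
    (isNonarchimedean_spectralNorm (K := E) (L := F))
  haveI : CharP (PowerSeries (ZMod p)) p := charP_of_injective_algebraMap (R := ZMod p) (A := PowerSeries (ZMod p)) PowerSeries.C_injective p
  haveI cE : CharP E p := charP_of_injective_algebraMap (R := PowerSeries (ZMod p)) (A := E) (IsFractionRing.injective _ _) p
  haveI cF : CharP F p := charP_of_injective_algebraMap (algebraMap E F).injective p
  refine ⟨F, nF, hult, inferInstance, cF, (algebraMap E F).comp (algebraMap (PowerSeries (ZMod p)) E), _, hXpos, hXlt, ?_, ?_, ?_⟩
  · exact hext _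
  · intro f
    rw [RingHom.comp_apply, hext, LaurentSeries.coe_algebraMap, hO]
    exact ⟨f, rfl⟩
  · intro x hx
    letI : Algebra (ZMod p) F := ZMod.algebra F p
    have hint : IsIntegral E x := Algebra.IsIntegral.isIntegral x
    have hmon := minpoly.monic hint
    have hc : ∀ n, ‖(minpoly E x).coeff n‖ ≤ 1 := (spectralValue_le_one_iff hmon).1 hx
    choose f hf using fun n => (hO _).1 (hc n)
    let d := (minpoly E x).natDegree
    have hd : 0 < d := minpoly.natDegree_pos hint
    let g : Polynomial (ZMod p) := Polynomial.X ^ d + ∑ i ∈ Finset.range d, Polynomial.C (PowerSeries.constantCoeff (f i)) * Polynomial.X ^ i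
    have hg : g.Monic := by
      apply Polynomial.monic_X_pow_add
      refine (Polynomial.degree_sum_le _ _).trans_lt ?_
      rw [Finset.sup_lt_iff (by exact_mod_cast WithBot.bot_lt_coe d)]
      intro b hb
      refine (Polynomial.degree_C_mul_X_pow_le _ _).trans_lt ?_
      exact_mod_cast Finset.mem_range.1 hb
    have hsmall : ‖Polynomial.aeval x g‖ < 1 := by
      have h0 : Polynomial.aeval x (minpoly E x) = 0 := minpoly.aeval _ _
      rw [Polynomial.aeval_eq_sum_range, Finset.sum_range_succ, hmon.coeff_natDegree, one_smul] at h0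
      have h1 : Polynomial.aeval x g = ∑ i ∈ Finset.range d, (algebraMap (ZMod p) F (PowerSeries.constantCoeff (f i)) - algebraMap E F ((minpoly E x).coeff i)) * x ^ i := by
        have : x ^ d = - ∑ i ∈ Finset.range d, algebraMap E F ((minpoly E x).coeff i) * x ^ i := by
          simp only [Algebra.smul_def] at h0
          linear_combination h0
        simp only [g, map_add, map_sum, map_mul, Polynomial.aeval_C, map_pow, Polynomial.aeval_X, sub_mul, Finset.sum_sub_distrib, this]
        ring
      rw [h1]
      refine lt_of_le_of_lt (IsUltrametricDist.norm_sum_le_of_forall_le_of_nonneg (C := ‖((PowerSeries.X : PowerSeries (ZMod p)) : E)‖) hXpos.le ?_) hXlt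
      intro i _
      rw [norm_mul, norm_pow]
      have h2 : ‖algebraMap (ZMod p) F (PowerSeries.constantCoeff (f i)) - algebraMap E F ((minpoly E x).coeff i)‖ ≤ ‖((PowerSeries.X : PowerSeries (ZMod p)) : E)‖ := by
        have e1 : algebraMap (ZMod p) F (PowerSeries.constantCoeff (f i)) = algebraMap E F ((PowerSeries.C (PowerSeries.constantCoeff (f i)) : PowerSeries (ZMod p)) : E) := by
          have : algebraMap (ZMod p) F = ((algebraMap E F).comp (algebraMap (PowerSeries (ZMod p)) E)).comp PowerSeries.C := Subsingleton.elim _ _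
          rw [this]; rfl
        rw [e1, ← hf, ← map_sub, hext]
        obtain ⟨q, hq⟩ : PowerSeries.X ∣ (PowerSeries.C (PowerSeries.constantCoeff (f i)) - f i) := by
          rw [PowerSeries.X_dvd_iff]; simp
        rw [← LaurentSeries.coe_algebraMap, ← map_sub, hq, map_mul, norm_mul]
        have : ‖algebraMap (PowerSeries (ZMod p)) E q‖ ≤ 1 := by
          rw [hO]; exact ⟨q, rfl⟩
        exact mul_le_of_le_one_right (norm_nonneg _) this
      calc _ ≤ ‖((PowerSeries.X : PowerSeries (ZMod p)) : E)‖ * 1 := by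
            gcongr; exact pow_le_one₀ (norm_nonneg _) hx
        _ = _ := mul_one _
    have hsp := IsAlgClosed.splits (g.map (algebraMap (ZMod p) F))
    have hev : Polynomial.aeval x g = (((g.map (algebraMap (ZMod p) F)).roots).map (fun a => x - a)).prod := by
      rw [Polynomial.aeval_def, ← Polynomial.eval_map, hsp.eval_eq_prod_roots_of_monic (hg.map _)]
    rw [hev] at hsmall
    obtain ⟨y, hy, hy'⟩ := multiset_prod_norm_lt _ hsmall
    obtain ⟨s, hs, rfl⟩ := Multiset.mem_map.1 hy
    refine ⟨s, alg_pow_eq p s ⟨g, hg, ?_⟩, hy'⟩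
    have := (Polynomial.mem_roots'.1 hs).2
    rwa [Polynomial.IsRoot, Polynomial.eval_map] at this


def FpAlg (p : ℕ) {F : Type*} [Field F] (s : F) : Prop := ∃ k : ℕ, 0 < k ∧ s ^ (p ^ k) = s

lemma FpAlg.iter {p : ℕ} {F : Type*} [Field F] {s : F} {k : ℕ} (h : s ^ (p ^ k) = s) (l : ℕ) :
    s ^ (p ^ (k * l)) = s := by
  induction l with
  | zero => simp
  | succ l ih => rw [Nat.mul_succ, pow_add, pow_mul, ih, h]

lemma FpAlg.add {p : ℕ} [Fact p.Prime] {F : Type*} [Field F] [CharP F p] {s t : F} (hs : FpAlg p s) (ht : FpAlg p t) :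
    FpAlg p (s + t) := by
  obtain ⟨k, hk, hs⟩ := hs
  obtain ⟨l, hl, ht⟩ := ht
  refine ⟨k * l, Nat.mul_pos hk hl, ?_⟩
  rw [add_pow_char_pow, FpAlg.iter hs, mul_comm, FpAlg.iter ht]

lemma FpAlg.zero {p : ℕ} [hp : Fact p.Prime] {F : Type*} [Field F] : FpAlg p (0 : F) :=
  ⟨1, one_pos, by simp [hp.out.ne_zero]⟩

lemma FpAlg.one {p : ℕ} {F : Type*} [Field F] : FpAlg p (1 : F) :=
  ⟨1, one_pos, by simp⟩

lemma FpAlg.norm_le {p : ℕ} [hp : Fact p.Prime] {F : Type*} [NormedField F] {s : F} (h : FpAlg p s) : ‖s‖ ≤ 1 := by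
  obtain ⟨k, hk, h⟩ := h
  by_contra hlt
  push Not at hlt
  have h1 : ‖s‖ ^ (p ^ k) = ‖s‖ := by rw [← norm_pow, h]
  have : 1 < p ^ k := Nat.one_lt_pow hk.ne' hp.out.one_lt
  have := pow_lt_pow_right₀ hlt this
  rw [pow_one, h1] at this
  exact lt_irrefl _ this

lemma reduce_aux {p : ℕ} [hp : Fact p.Prime] {F : Type*} [NormedField F] [CharP F p]
    (hres : ∀ x : F, ‖x‖ ≤ 1 → ∃ s : F, FpAlg p s ∧ ‖x - s‖ < 1) (W : Finset F) (hW0 : ∀ w ∈ W, w ≠ 0) :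
    ∀ (n : ℕ) (x : F), (W.filter (fun w => ‖w‖ ≤ ‖x‖)).card ≤ n →
    ∃ (s : F → F) (y : F), (∀ w, FpAlg p (s w)) ∧ x = ∑ w ∈ W, s w * w + y ∧ ‖y‖ ≤ ‖x‖ ∧
      (∀ w ∈ W, ‖w‖ ≠ ‖y‖) := by
  classical
  intro n
  induction n with
  | zero =>
    intro x hx
    refine ⟨fun _ => 0, x, fun _ => FpAlg.zero, by simp, le_rfl, ?_⟩
    intro w hw h
    rw [Nat.le_zero, Finset.card_eq_zero, Finset.filter_eq_empty_iff] at hx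
    exact hx hw h.le
  | succ n ih =>
    intro x hx
    by_cases h : ∀ w ∈ W, ‖w‖ ≠ ‖x‖
    · exact ⟨fun _ => 0, x, fun _ => FpAlg.zero, by simp, le_rfl, h⟩
    push Not at h
    obtain ⟨w, hw, hwx⟩ := h
    have hw0 := hW0 w hw
    obtain ⟨s, hs, hs'⟩ := hres (x / w) (by rw [norm_div, hwx]; exact div_self_le_one _)
    have hlt : ‖x - s * w‖ < ‖x‖ := by
      have : x - s * w = (x / w - s) * w := by field_simp
      rw [this, norm_mul, ← hwx]
      exact mul_lt_of_lt_one_left (norm_pos_iff.2 hw0) hs'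
    obtain ⟨t, y, ht, hy, hyx, hyW⟩ := ih (x - s * w) (by
      rw [← Nat.lt_succ_iff]
      refine lt_of_lt_of_le (Finset.card_lt_card ?_) hx
      rw [Finset.ssubset_iff_of_subset]
      · refine ⟨w, by simp [hw, hwx.le], ?_⟩
        simp only [Finset.mem_filter, not_and, not_le]
        intro _
        rwa [hwx]
      · intro v hv
        simp only [Finset.mem_filter] at hv ⊢
        exact ⟨hv.1, hv.2.trans hlt.le⟩)
    refine ⟨fun v => t v + if v = w then s else 0, y, ?_, ?_, hyx.trans hlt.le, hyW⟩
    · intro v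
      refine (ht v).add ?_
      split_ifs
      · exact hs
      · exact FpAlg.zero
    · simp only [add_mul, Finset.sum_add_distrib, ite_mul, zero_mul, Finset.sum_ite_eq', hw, if_true]
      linear_combination hy

lemma exists_norm_basis {p : ℕ} [hp : Fact p.Prime] {F : Type*} [NormedField F] [CharP F p]
    (hres : ∀ x : F, ‖x‖ ≤ 1 → ∃ s : F, FpAlg p s ∧ ‖x - s‖ < 1) (c : ℝ) (S : Finset F) (hS : ∀ x ∈ S, ‖x‖ ≤ c) :
    ∃ (W : Finset F) (s : F → F → F), (∀ w ∈ W, w ≠ 0 ∧ ‖w‖ ≤ c) ∧ Set.InjOn (fun w : F => ‖w‖) W ∧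
      (∀ x w, FpAlg p (s x w)) ∧ ∀ x ∈ S, x = ∑ w ∈ W, s x w * w := by
  classical
  induction S using Finset.induction with
  | empty => exact ⟨∅, fun _ _ => 0, by simp, by simp, fun _ _ => FpAlg.zero, by simp⟩
  | insert x S hx ih =>
    obtain ⟨W, s, hW, hinj, hs, hsum⟩ := ih (fun y hy => hS y (Finset.mem_insert_of_mem hy))
    obtain ⟨t, y, ht, hy, hyx, hyW⟩ := reduce_aux hres W (fun w hw => (hW w hw).1) _ x le_rfl
    by_cases hy0 : y = 0
    · subst hy0
      refine ⟨W, fun z => if z = x then t else s z, hW, hinj, ?_, ?_⟩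
      · intro z w
        dsimp only
        split_ifs
        · exact ht w
        · exact hs z w
      · intro z hz
        by_cases hzx : z = x
        · subst hzx; simpa using hy
        · simp only [hzx, if_false]
          exact hsum z ((Finset.mem_insert.1 hz).resolve_left hzx)
    · have hyn : y ∉ W := fun h => hyW y h rfl
      refine ⟨insert y W, fun z w => if z = x then (if w = y then 1 else t w) else (if w = y then 0 else s z w), ?_, ?_, ?_, ?_⟩
      · intro w hw
        rcases Finset.mem_insert.1 hw with rfl | hw
        · exact ⟨hy0, hyx.trans (hS x (by simp))⟩
        · exact hW w hw
      · rw [Finset.coe_insert, Set.injOn_insert (by exact_mod_cast hyn)]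
        refine ⟨hinj, ?_⟩
        rintro ⟨w, hw, h⟩
        exact hyW w hw h
      · intro z w
        dsimp only
        split_ifs
        · exact FpAlg.one
        · exact ht w
        · exact FpAlg.zero
        · exact hs z w
      · have hne : ∀ w ∈ W, w ≠ y := fun w hw h => hyn (h ▸ hw)
        intro z hz
        rw [Finset.sum_insert hyn]
        by_cases hzx : z = x
        · subst hzx
          simp only [if_true]
          rw [Finset.sum_congr rfl (g := fun w => t w * w) (fun w hw => by rw [if_neg (hne w hw)])]
          linear_combination hy
        · simp only [hzx, if_false, if_true]
          rw [Finset.sum_congr rfl (g := fun w => s z w * w) (fun w hw => by rw [if_neg (hne w hw)])]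
          rw [zero_mul, zero_add]
          exact hsum z ((Finset.mem_insert.1 hz).resolve_left hzx)

lemma eig_norm_le {F : Type*} [NormedField F] [IsUltrametricDist F] {N : ℕ} (X : Matrix (Fin N) (Fin N) F)
    (c : ℝ) (hX : ∀ i j, ‖X i j‖ ≤ c) (μ : F) (hμ : X.charpoly.IsRoot μ) : ‖μ‖ ≤ c := by
  rw [← Matrix.charpoly_toLin', ← Module.End.hasEigenvalue_iff_isRoot_charpoly] at hμ
  obtain ⟨v, hv⟩ := hμ.exists_hasEigenvector
  have h1 := hv.apply_eq_smul
  have h2 := hv.2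
  have : Nonempty (Fin N) := by
    by_contra h
    rw [not_nonempty_iff] at h
    exact h2 (Subsingleton.elim _ _)
  obtain ⟨i, hi⟩ := Finite.exists_max (fun i => ‖v i‖)
  have hpos : 0 < ‖v i‖ := by
    by_contra h
    apply h2
    ext j
    have := (hi j).trans (not_lt.1 h)
    simpa using this
  have h3 : ‖μ‖ * ‖v i‖ ≤ c * ‖v i‖ := by
    have h4 := congrFun h1 i
    rw [Matrix.toLin'_apply, Pi.smul_apply, smul_eq_mul] at h4
    rw [← norm_mul, ← h4]
    have hc : 0 ≤ c := (norm_nonneg _).trans (hX i i)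
    rw [Matrix.mulVec, dotProduct]
    refine IsUltrametricDist.norm_sum_le_of_forall_le_of_nonneg (by positivity) ?_
    intro j _
    rw [norm_mul]
    exact mul_le_mul (hX _ _) (hi j) (norm_nonneg _) hc
  exact le_of_mul_le_mul_right h3 hpos

lemma charpoly_dvd {F : Type*} [Field F] [IsAlgClosed F] [DecidableEq F] {N : ℕ} (X : Matrix (Fin N) (Fin N) F) (M : ℕ) (hM : N ≤ M) :
    X.charpoly ∣ (∏ μ ∈ X.charpoly.roots.toFinset, (Polynomial.X - Polynomial.C μ)) ^ M := by
  have h : X.charpoly = (X.charpoly.roots.map (fun a => Polynomial.X - Polynomial.C a)).prod :=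
    (IsAlgClosed.splits X.charpoly).eq_prod_roots_of_monic (Matrix.charpoly_monic X)
  conv_lhs => rw [h]
  rw [Finset.prod, Multiset.toFinset_val, ← Multiset.prod_nsmul, ← Multiset.map_nsmul]
  apply Multiset.prod_dvd_prod_of_le
  apply Multiset.map_le_map
  rw [Multiset.le_iff_count]
  intro a
  by_cases ha : a ∈ X.charpoly.roots
  · rw [Multiset.count_nsmul, Multiset.count_dedup, if_pos ha, mul_one]
    refine (Multiset.count_le_card _ _).trans ((Polynomial.card_roots' _).trans ?_)
    simpa using hM
  · rw [Multiset.count_eq_zero_of_notMem ha]; exact Nat.zero_le _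

lemma pow_eq_lagrange {F A : Type*} [Field F] [DecidableEq F] [Ring A] [Algebra F A] (Y : A) (S : Finset F)
    (hY : Polynomial.aeval Y (∏ μ ∈ S, (Polynomial.X - Polynomial.C μ)) = 0) :
    ∃ e : F → A, ∀ j : ℕ, Y ^ j = ∑ μ ∈ S, μ ^ j • e μ := by
  refine ⟨fun μ => Polynomial.aeval Y (Lagrange.basis S id μ), fun j => ?_⟩
  have hd : (∏ μ ∈ S, (Polynomial.X - Polynomial.C μ)) ∣ (Polynomial.X ^ j - ∑ μ ∈ S, Polynomial.C (μ ^ j) * Lagrange.basis S id μ) := by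
    apply Finset.prod_dvd_of_coprime
    · intro a _ b _ hab
      exact Polynomial.isCoprime_X_sub_C_of_isUnit_sub (sub_ne_zero.2 hab).isUnit
    · intro a ha
      rw [Polynomial.dvd_iff_isRoot, Polynomial.IsRoot]
      simp only [Polynomial.eval_sub, Polynomial.eval_pow, Polynomial.eval_X, Polynomial.eval_finsetSum, Polynomial.eval_mul, Polynomial.eval_C]
      rw [Finset.sum_eq_single a]
      · have := Lagrange.eval_basis_self (s := S) (v := (id : F → F)) Function.injective_id.injOn ha
        simp only [id] at this
        rw [this]; ring
      · intro b hb hba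
        have := Lagrange.eval_basis_of_ne (s := S) (v := (id : F → F)) hba ha
        simp only [id] at this
        rw [this, mul_zero]
      · intro h; exact absurd ha h
  obtain ⟨q, hq⟩ := hd
  have := congrArg (Polynomial.aeval Y) hq
  rw [map_mul, hY, zero_mul] at this
  simp only [map_sub, map_pow, Polynomial.aeval_X, map_sum, map_mul, Polynomial.aeval_C, sub_eq_zero] at this
  rw [this]
  refine Finset.sum_congr rfl fun μ _ => ?_
  rw [Algebra.smul_def]; simp

lemma common_exp {F ι κ : Type*} [Field F] {p : ℕ} (S : Finset ι) (T : Finset κ) (s : ι → κ → F) (hs : ∀ x w, FpAlg p (s x w)) :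
    ∃ f : ℕ, 0 < f ∧ ∀ x ∈ S, ∀ w ∈ T, s x w ^ (p ^ f) = s x w := by
  choose k hk h using hs
  refine ⟨∏ x ∈ S, ∏ w ∈ T, k x w, Finset.prod_pos fun x _ => Finset.prod_pos fun w _ => hk x w, ?_⟩
  intro x hx w hw
  obtain ⟨l, hl⟩ := (Finset.dvd_prod_of_mem (k x) hw).trans (Finset.dvd_prod_of_mem (fun x => ∏ w ∈ T, k x w) hx)
  rw [hl]
  exact FpAlg.iter (h x w) l

theorem pow_expansion {p : ℕ} [hp : Fact p.Prime] {F : Type*} [NormedField F] [IsUltrametricDist F] [CharP F p] [IsAlgClosed F]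
    (hres : ∀ x : F, ‖x‖ ≤ 1 → ∃ s : F, FpAlg p s ∧ ‖x - s‖ < 1) {N : ℕ}
    (X : Matrix (Fin N) (Fin N) F) (c : ℝ) (hc : c < 1) (hX : ∀ i j, ‖X i j‖ ≤ c) :
    ∃ f : ℕ, 0 < f ∧ ∃ (W : Finset F) (e : F → Matrix (Fin N) (Fin N) F),
      (∀ w ∈ W, w ≠ 0 ∧ ‖w‖ < 1) ∧ Set.InjOn (fun w : F => ‖w‖) W ∧
      ∀ a : ℕ, X ^ (p ^ N * p ^ (f * a)) = ∑ w ∈ W, w ^ (p ^ (f * a)) • e w := by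
  classical
  set S0 := X.charpoly.roots.toFinset with hS0
  set S := S0.image (fun x => x ^ (p ^ N)) with hS
  have hkill : Polynomial.aeval (X ^ (p ^ N)) (∏ μ ∈ S, (Polynomial.X - Polynomial.C μ)) = 0 := by
    have h1 : Polynomial.aeval (X ^ (p ^ N)) (∏ μ ∈ S, (Polynomial.X - Polynomial.C μ)) =
        Polynomial.aeval X ((∏ μ ∈ S0, (Polynomial.X - Polynomial.C μ)) ^ (p ^ N)) := by
      have h2 : (∏ μ ∈ S, (Polynomial.X - Polynomial.C μ)).comp (Polynomial.X ^ (p ^ N)) = (∏ μ ∈ S0, (Polynomial.X - Polynomial.C μ)) ^ (p ^ N) := by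
        rw [hS, Finset.prod_image, Polynomial.prod_comp, ← Finset.prod_pow]
        · refine Finset.prod_congr rfl fun μ _ => ?_
          rw [sub_pow_char_pow]; simp
        · intro a _ b _ h
          exact iterateFrobenius_inj F p N h
      rw [← h2, Polynomial.aeval_comp]; simp
    rw [h1]
    obtain ⟨q, hq⟩ := charpoly_dvd X (p ^ N) (Nat.lt_pow_self hp.out.one_lt).le
    rw [hq, map_mul, Matrix.aeval_self_charpoly, zero_mul]
  obtain ⟨e, he⟩ := pow_eq_lagrange _ S hkill
  have hSn : ∀ x ∈ S, ‖x‖ ≤ c := by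
    intro x hx
    obtain ⟨y, hy, rfl⟩ := Finset.mem_image.1 hx
    have hy' : ‖y‖ ≤ c := eig_norm_le X c hX y (Polynomial.mem_roots'.1 (Multiset.mem_toFinset.1 hy)).2
    rw [norm_pow]
    exact (pow_le_of_le_one (norm_nonneg _) (hy'.trans hc.le) (pow_pos hp.out.pos N).ne').trans hy'
  obtain ⟨W, s, hW, hinj, hs, hsum⟩ := exists_norm_basis hres c S hSn
  obtain ⟨f, hf, hsf⟩ := common_exp S W s hs
  refine ⟨f, hf, W, fun w => ∑ x ∈ S, s x w • e x, fun w hw => ⟨(hW w hw).1, (hW w hw).2.trans_lt hc⟩, hinj, ?_⟩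
  intro a
  rw [pow_mul, he]
  simp only [Finset.smul_sum]
  rw [Finset.sum_comm]
  refine Finset.sum_congr rfl fun x hx => ?_
  have hx' := congrArg (fun t => t ^ (p ^ (f * a))) (hsum x hx)
  simp only [sum_pow_char_pow] at hx'
  rw [hx', Finset.sum_smul]
  refine Finset.sum_congr rfl fun w hw => ?_
  rw [mul_pow, FpAlg.iter (hsf x hx w hw), smul_smul, mul_comm]


lemma ultra_sum_lt {V ι : Type*} [SeminormedAddCommGroup V] [IsUltrametricDist V] (s : Finset ι) (f : ι → V) (C : ℝ)
    (hC : 0 < C) (h : ∀ i ∈ s, ‖f i‖ < C) : ‖∑ i ∈ s, f i‖ < C := by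
  classical
  induction s using Finset.induction with
  | empty => simpa
  | insert a s ha ih =>
    rw [Finset.sum_insert ha]
    refine (IsUltrametricDist.norm_add_le_max _ _).trans_lt (max_lt (h a (by simp)) (ih fun i hi => h i (by simp [hi])))

lemma ultra_sum_eq {V ι : Type*} [DecidableEq ι] [SeminormedAddCommGroup V] [IsUltrametricDist V] (s : Finset ι) (f : ι → V) (i : ι)
    (hi : i ∈ s) (hpos : 0 < ‖f i‖) (h : ∀ j ∈ s, j ≠ i → ‖f j‖ < ‖f i‖) : ‖∑ j ∈ s, f j‖ = ‖f i‖ := by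
  rw [← Finset.add_sum_erase s f hi]
  have : ‖∑ x ∈ s.erase i, f x‖ < ‖f i‖ := ultra_sum_lt _ _ _ hpos (fun j hj => h j (Finset.mem_of_mem_erase hj) (Finset.ne_of_mem_erase hj))
  rw [IsUltrametricDist.norm_add_eq_max_of_norm_ne_norm this.ne', max_eq_left this.le]

lemma num1 (θ L κ : ℝ) (h0 : 0 ≤ θ) (h1 : θ < 1) (hκ : 0 < κ) : ∃ n0 : ℕ, ∀ n ≥ n0, θ ^ n * L < κ := by
  have := (tendsto_pow_atTop_nhds_zero_of_lt_one h0 h1).mul_const L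
  rw [zero_mul] at this
  exact Filter.eventually_atTop.1 (this.eventually_lt_const hκ)

lemma le_qpow (q : ℕ) (hq : 2 ≤ q) (b : ℕ) : b ≤ q ^ b := (Nat.lt_pow_self hq).le

lemma num2 (β' β L κ : ℝ) (h0 : 0 ≤ β') (h1 : β' < β) (hκ : 0 < κ) (q : ℕ) (hq : 2 ≤ q) :
    ∃ b0 : ℕ, ∀ b ≥ b0, β' ^ (q ^ b) * L < β ^ (q ^ b) * κ := by
  have hβ : 0 < β := h0.trans_lt h1
  obtain ⟨n0, h⟩ := num1 (β' / β) L κ (by positivity) ((div_lt_one hβ).2 h1) hκ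
  refine ⟨n0, fun b hb => ?_⟩
  have := h (q ^ b) (hb.trans (le_qpow q hq b))
  rw [div_pow, div_mul_eq_mul_div, div_lt_iff₀ (by positivity)] at this
  linarith

lemma num3 (α' α β' β L κ : ℝ) (h0 : 0 ≤ α') (h1 : α' < α) (hβ : 0 < β) (hβ1 : β < 1) (hβ'0 : 0 ≤ β') (hβ' : β' ≤ 1) (hL : 0 ≤ L)
    (hκ : 0 < κ) (q : ℕ) (hq : 2 ≤ q) :
    ∃ b0 s : ℕ, ∀ b ≥ b0, ∀ a ≥ b + s, α' ^ (q ^ a) * β' ^ (q ^ b) * L < α ^ (q ^ a) * β ^ (q ^ b) * κ := by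
  have hα : 0 < α := h0.trans_lt h1
  set θ := α' / α with hθ
  have hθ0 : 0 ≤ θ := by positivity
  have hθ1 : θ < 1 := (div_lt_one hα).2 h1
  obtain ⟨n0, h⟩ := num1 β L κ hβ.le hβ1 hκ
  obtain ⟨s, hs⟩ := num1 θ 1 (β ^ 2) hθ0 hθ1 (by positivity)
  refine ⟨n0, s, fun b hb a ha => ?_⟩
  have e1 : β ^ (q ^ b) * L < κ := h (q ^ b) (hb.trans (le_qpow q hq b))
  have e2 : s * q ^ b ≤ q ^ a := by
    obtain ⟨t, rfl⟩ := Nat.exists_eq_add_of_le ha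
    calc s * q ^ b ≤ q ^ (s + t) * q ^ b := by
          gcongr; exact (le_qpow q hq s).trans (Nat.pow_le_pow_right (by omega) (by omega))
      _ = q ^ (b + s + t) := by ring
  have e3 : θ ^ (q ^ a) ≤ β ^ (q ^ b) * β ^ (q ^ b) := by
    calc θ ^ (q ^ a) ≤ θ ^ (s * q ^ b) := pow_le_pow_of_le_one hθ0 hθ1.le e2
      _ = (θ ^ s) ^ (q ^ b) := pow_mul _ _ _
      _ ≤ (β ^ 2) ^ (q ^ b) := by
          gcongr; simpa using (hs s le_rfl).le
      _ = _ := by ring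
  have e4 : α' = θ * α := by rw [hθ]; field_simp
  rw [e4, mul_pow]
  have hb' : β' ^ (q ^ b) ≤ 1 := pow_le_one₀ hβ'0 hβ'
  calc θ ^ q ^ a * α ^ q ^ a * β' ^ q ^ b * L ≤ (β ^ (q ^ b) * β ^ (q ^ b)) * α ^ q ^ a * 1 * L := by gcongr
    _ = α ^ q ^ a * β ^ q ^ b * (β ^ (q ^ b) * L) := by ring
    _ < _ := by gcongr

lemma dominant {F V : Type*} [NormedField F] [NormedAddCommGroup V] [NormedSpace F V] [IsUltrametricDist V]
    (q : ℕ) (hq : 2 ≤ q) (W Z : Finset F) (hW : ∀ w ∈ W, w ≠ 0 ∧ ‖w‖ < 1) (hZ : ∀ w ∈ Z, w ≠ 0 ∧ ‖w‖ < 1)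
    (hWi : Set.InjOn (fun w : F => ‖w‖) W) (hZi : Set.InjOn (fun w : F => ‖w‖) Z) (cc : F → F → V)
    (hne : ∃ w ∈ W, ∃ z ∈ Z, cc w z ≠ 0) :
    ∃ α β κ : ℝ, 0 < α ∧ α < 1 ∧ 0 < β ∧ β < 1 ∧ 0 < κ ∧ ∃ b0 s : ℕ, ∀ b ≥ b0, ∀ a ≥ b + s,
      ‖∑ w ∈ W, ∑ z ∈ Z, (w ^ (q ^ a) * z ^ (q ^ b)) • cc w z‖ = α ^ (q ^ a) * β ^ (q ^ b) * κ := by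
  classical
  obtain ⟨w1, hw1, z1, hz1, h1⟩ := hne
  obtain ⟨w, hw, hwmax⟩ := (W.filter (fun w => ∃ z ∈ Z, cc w z ≠ 0)).exists_max_image (fun w => ‖w‖)
    ⟨w1, by simp only [Finset.mem_filter]; exact ⟨hw1, z1, hz1, h1⟩⟩
  obtain ⟨hwW, z2, hz2, h2⟩ := Finset.mem_filter.1 hw
  obtain ⟨z, hz, hzmax⟩ := (Z.filter (fun z => cc w z ≠ 0)).exists_max_image (fun w => ‖w‖)
    ⟨z2, by simp only [Finset.mem_filter]; exact ⟨hz2, h2⟩⟩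
  obtain ⟨hzZ, hwz⟩ := Finset.mem_filter.1 hz
  have hα := norm_pos_iff.2 (hW w hwW).1
  have hβ := norm_pos_iff.2 (hZ z hzZ).1
  have hκ := norm_pos_iff.2 hwz
  have key : ∀ x : F × F, ∃ b0 s : ℕ, x ∈ W ×ˢ Z → x ≠ (w, z) → ∀ b ≥ b0, ∀ a ≥ b + s, 
      ‖x.1‖ ^ (q ^ a) * ‖x.2‖ ^ (q ^ b) * ‖cc x.1 x.2‖ < ‖w‖ ^ (q ^ a) * ‖z‖ ^ (q ^ b) * ‖cc w z‖ := by
    rintro ⟨w', z'⟩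
    by_cases hx : (w', z') ∈ W ×ˢ Z
    swap
    · exact ⟨0, 0, fun h => absurd h hx⟩
    rw [Finset.mem_product] at hx
    by_cases hc : cc w' z' = 0
    · refine ⟨0, 0, fun _ _ b _ a _ => ?_⟩
      simp only [hc, norm_zero, mul_zero]
      positivity
    have hle : ‖w'‖ ≤ ‖w‖ := hwmax w' (by simp only [Finset.mem_filter]; exact ⟨hx.1, z', hx.2, hc⟩)
    rcases hle.lt_or_eq with hlt | heq
    · obtain ⟨b0, s, h⟩ := num3 ‖w'‖ ‖w‖ ‖z'‖ ‖z‖ ‖cc w' z'‖ ‖cc w z‖ (norm_nonneg _) hlt hβ (hZ z hzZ).2 (norm_nonneg _) (hZ z' hx.2).2.le (norm_nonneg _) hκ q hq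
      exact ⟨b0, s, fun _ _ => h⟩
    · have : w' = w := hWi hx.1 hwW heq
      subst this
      have hle : ‖z'‖ ≤ ‖z‖ := hzmax z' (by simp only [Finset.mem_filter]; exact ⟨hx.2, hc⟩)
      rcases hle.lt_or_eq with hlt | heq
      · obtain ⟨b0, h⟩ := num2 ‖z'‖ ‖z‖ ‖cc w' z'‖ ‖cc w' z‖ (norm_nonneg _) hlt hκ q hq
        refine ⟨b0, 0, fun _ _ b hb a _ => ?_⟩
        have := h b hb
        simp only [mul_assoc]
        gcongr
      · have : z' = z := hZi hx.2 hzZ heq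
        subst this
        exact ⟨0, 0, fun _ h => absurd rfl h⟩
  choose b0 s hkey using key
  refine ⟨‖w‖, ‖z‖, ‖cc w z‖, hα, (hW w hwW).2, hβ, (hZ z hzZ).2, hκ, (W ×ˢ Z).sup b0, (W ×ˢ Z).sup s, ?_⟩
  intro b hb a ha
  rw [← Finset.sum_product']
  have hnorm : ∀ x : F × F, ‖(x.1 ^ (q ^ a) * x.2 ^ (q ^ b)) • cc x.1 x.2‖ = ‖x.1‖ ^ (q ^ a) * ‖x.2‖ ^ (q ^ b) * ‖cc x.1 x.2‖ := by
    intro x; rw [norm_smul, norm_mul, norm_pow, norm_pow]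
  have hmem : (w, z) ∈ W ×ˢ Z := Finset.mem_product.2 ⟨hwW, hzZ⟩
  rw [ultra_sum_eq (W ×ˢ Z) (fun x => (x.1 ^ (q ^ a) * x.2 ^ (q ^ b)) • cc x.1 x.2) (w, z) hmem, hnorm]
  · rw [hnorm]; positivity
  · intro x hx hxne
    rw [hnorm, hnorm]
    have hb' : b0 x ≤ b := (Finset.le_sup hx).trans hb
    have hs' : s x ≤ (W ×ˢ Z).sup s := Finset.le_sup hx
    exact hkey x hx hxne b hb' a (by omega)

lemma dist_depth (α β : ℝ) (hα : 0 < α) (hα1 : α < 1) (hβ : 0 < β) (hβ1 : β < 1) (q : ℕ) (hq : 2 ≤ q) :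
    ∃ s : ℕ, ∀ a b a' b' : ℕ, b + s ≤ a → b' + s ≤ a' →
      α ^ (q ^ a) * β ^ (q ^ b) = α ^ (q ^ a') * β ^ (q ^ b') → a = a' ∧ b = b' := by
  obtain ⟨s, hs⟩ := num1 α 1 β hα.le hα1 hβ
  have aux : ∀ a b a' b' : ℕ, b + s ≤ a → a < a' → α ^ (q ^ a') * β ^ (q ^ b') < α ^ (q ^ a) * β ^ (q ^ b) := by
    intro a b a' b' h1 h3
    have e1 : q ^ a + q ^ a ≤ q ^ a' := by
      calc q ^ a + q ^ a = q ^ a * 2 := by ring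
        _ ≤ q ^ a * q := by gcongr
        _ = q ^ (a + 1) := by ring
        _ ≤ q ^ a' := Nat.pow_le_pow_right (by omega) h3
    have e2 : α ^ (q ^ a) < β ^ (q ^ b) := by
      calc α ^ (q ^ a) ≤ α ^ (s * q ^ b) := by
            refine pow_le_pow_of_le_one hα.le hα1.le ?_
            calc s * q ^ b ≤ q ^ s * q ^ b := by gcongr; exact le_qpow q hq s
              _ = q ^ (b + s) := by ring
              _ ≤ q ^ a := Nat.pow_le_pow_right (by omega) h1
        _ = (α ^ s) ^ (q ^ b) := pow_mul _ _ _
        _ < β ^ (q ^ b) := by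
          refine pow_lt_pow_left₀ (by simpa using hs s le_rfl) (by positivity) (pow_pos (by omega) _).ne'
    calc α ^ (q ^ a') * β ^ (q ^ b') ≤ α ^ (q ^ a + q ^ a) * 1 := by
          gcongr ?_ * ?_
          · exact pow_le_pow_of_le_one hα.le hα1.le e1
          · exact pow_le_one₀ hβ.le hβ1.le
      _ = α ^ (q ^ a) * α ^ (q ^ a) := by ring
      _ < _ := by gcongr
  refine ⟨s, fun a b a' b' h1 h2 h => ?_⟩
  rcases lt_trichotomy a a' with h3 | h3 | h3
  · exact absurd h (aux a b a' b' h1 h3).ne'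
  · subst h3
    refine ⟨rfl, ?_⟩
    have h4 : β ^ (q ^ b) = β ^ (q ^ b') := mul_left_cancel₀ (by positivity) h
    have h5 := (pow_right_strictAnti₀ hβ hβ1).injective h4
    exact Nat.pow_right_injective hq h5
  · exact absurd h (aux a' b' a b h2 h3).ne


lemma idx_lower {G : Type*} [Group G] (Γ : ℕ → Subgroup G) (hanti : Antitone Γ) (hfin : ∀ m, (Γ m).index ≠ 0) (S : Finset ℕ)
    (hS : ∀ k ∈ S, Γ (k + 1) ≠ Γ k) (m : ℕ) : 2 ^ (S.filter (· < m)).card ≤ (Γ m).index := by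
  induction m with
  | zero => simpa using Nat.one_le_iff_ne_zero.2 (hfin 0)
  | succ m ih =>
    have hle : Γ (m + 1) ≤ Γ m := hanti (Nat.le_succ m)
    have h1 := Subgroup.relIndex_mul_index hle
    by_cases hm : m ∈ S
    · have e : S.filter (· < m + 1) = insert m (S.filter (· < m)) := by
        ext x; simp only [Finset.mem_filter, Finset.mem_insert]
        constructor
        · rintro ⟨hx, hlt⟩
          rcases Nat.lt_succ_iff_lt_or_eq.1 hlt with h | h
          · exact Or.inr ⟨hx, h⟩
          · exact Or.inl h
        · rintro (rfl | ⟨hx, h⟩)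
          · exact ⟨hm, by omega⟩
          · exact ⟨hx, by omega⟩
      rw [e, Finset.card_insert_of_notMem (by simp), ← h1, pow_succ, mul_comm]
      refine Nat.mul_le_mul ?_ ih
      have h2 : (Γ (m + 1)).relIndex (Γ m) ≠ 1 := by
        intro h
        exact hS m hm (le_antisymm hle (Subgroup.relIndex_eq_one.1 h))
      have h3 : (Γ (m + 1)).relIndex (Γ m) ≠ 0 := by
        intro h; rw [h, zero_mul] at h1; exact hfin _ h1.symm
      omega
    · have e : S.filter (· < m + 1) = S.filter (· < m) := by
        ext x; simp only [Finset.mem_filter]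
        constructor
        · rintro ⟨hx, hlt⟩
          refine ⟨hx, lt_of_le_of_ne (Nat.lt_succ_iff.1 hlt) ?_⟩
          rintro rfl; exact hm hx
        · rintro ⟨hx, hlt⟩; exact ⟨hx, by omega⟩
      rw [e]
      exact ih.trans (Nat.le_of_dvd (Nat.pos_of_ne_zero (hfin _)) (Subgroup.index_dvd_of_le hle))

lemma count_contra {G : Type*} [Group G] (Γ : ℕ → Subgroup G) (hanti : Antitone Γ) (hfin : ∀ m, (Γ m).index ≠ 0)
    (p : ℕ) (hp : 2 ≤ p) (C B : ℕ) (hUB : ∀ r, (Γ (p ^ r)).index ≤ C * B ^ r) (f C1 b0 s : ℕ) (k : ℕ → ℕ → ℕ)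
    (hk : ∀ b ≥ b0, ∀ a ≥ b + s, Γ (k a b + 1) ≠ Γ (k a b) ∧ k a b ≤ C1 * p ^ (f * a))
    (hinj : ∀ b ≥ b0, ∀ a ≥ b + s, ∀ b' ≥ b0, ∀ a' ≥ b' + s, k a b = k a' b' → a = a' ∧ b = b') : False := by
  have key : ∀ T : ℕ, 2 ^ (T * T) ≤ C * B ^ (C1 + f * (b0 + s) + 2 * f * T) := by
    intro T
    let Pr := (Finset.range T) ×ˢ (Finset.range T)
    let φ : ℕ × ℕ → ℕ := fun x => k (b0 + T + s + x.1) (b0 + x.2)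
    have hS : ∀ x ∈ Pr, Γ (φ x + 1) ≠ Γ (φ x) ∧ φ x ≤ C1 * p ^ (f * (b0 + T + s + x.1)) := by
      intro x hx
      simp only [Pr, Finset.mem_product, Finset.mem_range] at hx
      exact hk _ (by omega) _ (by omega)
    have hcard : (Pr.image φ).card = T * T := by
      rw [Finset.card_image_of_injOn]
      · simp [Pr]
      · intro x hx y hy hxy
        simp only [Pr, Finset.coe_product, Set.mem_prod, Finset.coe_range, Set.mem_Iio] at hx hy
        have := hinj (b0 + x.2) (by omega) (b0 + T + s + x.1) (by omega) (b0 + y.2) (by omega) (b0 + T + s + y.1) (by omega) hxy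
        ext <;> omega
    have h1 := idx_lower Γ hanti hfin (Pr.image φ) (by
      intro m hm
      obtain ⟨x, hx, rfl⟩ := Finset.mem_image.1 hm
      exact (hS x hx).1) (p ^ (C1 + f * (b0 + s) + 2 * f * T))
    rw [Finset.filter_true_of_mem, hcard] at h1
    · exact h1.trans (hUB _)
    · intro m hm
      obtain ⟨x, hx, rfl⟩ := Finset.mem_image.1 hm
      refine (hS x hx).2.trans_lt ?_
      simp only [Pr, Finset.mem_product, Finset.mem_range] at hx
      calc C1 * p ^ (f * (b0 + T + s + x.1)) < p ^ C1 * p ^ (f * (b0 + T + s + x.1)) := by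
            have : C1 < p ^ C1 := Nat.lt_pow_self hp
            have : 0 < p ^ (f * (b0 + T + s + x.1)) := pow_pos (by omega) _
            gcongr
        _ = p ^ (C1 + f * (b0 + T + s + x.1)) := by rw [pow_add]
        _ ≤ _ := by
          refine Nat.pow_le_pow_right (by omega) ?_
          have : f * (b0 + T + s + x.1) ≤ f * (b0 + s + 2 * T) := Nat.mul_le_mul_left _ (by omega)
          calc _ ≤ C1 + f * (b0 + s + 2 * T) := by omega
            _ = _ := by ring
  set D := C * B ^ (C1 + f * (b0 + s)) with hD
  set l := D + B ^ (2 * f) with hl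
  have h := key (l + 1)
  have h2 : C * B ^ (C1 + f * (b0 + s) + 2 * f * (l + 1)) ≤ 2 ^ (l + l * (l + 1)) := by
    calc _ = D * (B ^ (2 * f)) ^ (l + 1) := by rw [hD, pow_add, ← pow_mul]; ring
      _ ≤ 2 ^ l * (2 ^ l) ^ (l + 1) := by
        have h3 : l ≤ 2 ^ l := (Nat.lt_pow_self (by norm_num)).le
        exact Nat.mul_le_mul (le_trans (by omega) h3) (Nat.pow_le_pow_left (le_trans (by omega) h3) _)
      _ = _ := by rw [← pow_mul, ← pow_add]
  have h4 := (Nat.pow_le_pow_iff_right (by norm_num : 1 < 2)).1 (h.trans h2)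
  nlinarith


def Dv {p N : ℕ} (m : ℕ) (M : Matrix (Fin N) (Fin N) (PowerSeries (ZMod p))) : Prop :=
  ∀ i j, (PowerSeries.X : PowerSeries (ZMod p)) ^ m ∣ M i j

section Dv
variable {p N : ℕ} {m l : ℕ} {A B : Matrix (Fin N) (Fin N) (PowerSeries (ZMod p))}

lemma Dv.zero : Dv m (0 : Matrix (Fin N) (Fin N) (PowerSeries (ZMod p))) := fun _ _ => dvd_zero _

lemma Dv.add (hA : Dv m A) (hB : Dv m B) : Dv m (A + B) := fun i j => dvd_add (hA i j) (hB i j)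

lemma Dv.neg (hA : Dv m A) : Dv m (-A) := fun i j => (dvd_neg).2 (hA i j)

lemma Dv.mul (hA : Dv m A) (hB : Dv l B) : Dv (m + l) (A * B) := fun i j => by
  rw [Matrix.mul_apply]
  refine Finset.dvd_sum fun k _ => ?_
  rw [pow_add]
  exact mul_dvd_mul (hA i k) (hB k j)

lemma Dv.nil : Dv 0 A := fun i j => by simp

lemma Dv.mulLeft (hA : Dv m A) : Dv m (B * A) := by
  have := (Dv.nil (A := B)).mul hA
  rwa [zero_add] at this

lemma Dv.mulRight (hA : Dv m A) : Dv m (A * B) := by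
  have := hA.mul (Dv.nil (A := B))
  rwa [add_zero] at this

lemma Dv.mono (h : l ≤ m) (hA : Dv m A) : Dv l A := fun i j => (pow_dvd_pow _ h).trans (hA i j)

lemma Dv.pow (hA : Dv m A) (n : ℕ) : Dv (m * n) (A ^ n) := by
  induction n with
  | zero => exact Dv.nil
  | succ n ih => rw [pow_succ, Nat.mul_succ]; exact ih.mul hA
end Dv

/-- congruence subgroups -/
def congSub {p N : ℕ} {G : Type*} [Group G] (ρ : G →* Matrix (Fin N) (Fin N) (PowerSeries (ZMod p))) (m : ℕ) : Subgroup G where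
  carrier := {g | Dv m (ρ g - 1)}
  one_mem' := by simp only [Set.mem_ofPred_eq, map_one, sub_self]; exact Dv.zero
  mul_mem' := by
    intro a b ha hb
    have : ρ (a * b) - 1 = ρ a * (ρ b - 1) + (ρ a - 1) := by rw [map_mul]; noncomm_ring
    simp only [Set.mem_ofPred_eq] at *
    rw [this]
    exact hb.mulLeft.add ha
  inv_mem' := by
    intro a ha
    simp only [Set.mem_ofPred_eq] at *
    have : ρ a⁻¹ - 1 = -(ρ a⁻¹ * (ρ a - 1)) := by
      rw [mul_sub, ← map_mul]; simp
    rw [this]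
    exact ha.mulLeft.neg

lemma mem_congSub {p N : ℕ} {G : Type*} [Group G] (ρ : G →* Matrix (Fin N) (Fin N) (PowerSeries (ZMod p))) (m : ℕ) (g : G) :
    g ∈ congSub ρ m ↔ Dv m (ρ g - 1) := Iff.rfl

lemma congSub_anti {p N : ℕ} {G : Type*} [Group G] (ρ : G →* Matrix (Fin N) (Fin N) (PowerSeries (ZMod p))) : Antitone (congSub ρ) := by
  intro m l h g hg
  exact Dv.mono h hg

instance congSub_normal {p N : ℕ} {G : Type*} [Group G] (ρ : G →* Matrix (Fin N) (Fin N) (PowerSeries (ZMod p))) (m : ℕ) : (congSub ρ m).Normal := by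
  refine ⟨fun a ha g => ?_⟩
  rw [mem_congSub] at *
  have : ρ (g * a * g⁻¹) - 1 = ρ g * (ρ a - 1) * ρ g⁻¹ := by
    rw [mul_sub, sub_mul, map_mul, map_mul, mul_one, ← map_mul ρ g g⁻¹]; simp
  rw [this]
  exact ha.mulLeft.mulRight

lemma congSub_finite {p N : ℕ} [Fact p.Prime] {G : Type*} [Group G] (ρ : G →* Matrix (Fin N) (Fin N) (PowerSeries (ZMod p))) (m : ℕ) :
    (congSub ρ m).index ≠ 0 := by
  rw [Subgroup.index]
  let φ : G → (Fin N → Fin N → Fin m → ZMod p) := fun g i j l => PowerSeries.coeff l (ρ g i j)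
  have hφ : ∀ g h, φ g = φ h → g⁻¹ * h ∈ congSub ρ m := by
    intro g h hgh
    rw [mem_congSub]
    have : ρ (g⁻¹ * h) - 1 = ρ g⁻¹ * (ρ h - ρ g) := by rw [mul_sub, ← map_mul, ← map_mul]; simp
    rw [this]
    apply Dv.mulLeft
    intro i j
    rw [PowerSeries.X_pow_dvd_iff]
    intro l hl
    have := congrFun (congrFun (congrFun hgh i) j) ⟨l, hl⟩
    simp only [φ] at this
    simp [this]
  have : Finite (G ⧸ congSub ρ m) := by
    refine Finite.of_injective (fun x : G ⧸ congSub ρ m => φ x.out) ?_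
    intro x y hxy
    rw [← QuotientGroup.out_eq' x, ← QuotientGroup.out_eq' y, QuotientGroup.eq]
    exact hφ _ _ hxy
  exact Nat.card_pos.ne'

lemma norm_iota {p : ℕ} [Fact p.Prime] {F : Type*} [NormedField F] (ι : PowerSeries (ZMod p) →+* F) (c : ℝ)
    (hX : ‖ι PowerSeries.X‖ = c) (hι : ∀ f, ‖ι f‖ ≤ 1) (f : PowerSeries (ZMod p)) (hf : f ≠ 0) :
    ∃ (k : ℕ) (u : PowerSeries (ZMod p)), f = PowerSeries.X ^ k * u ∧ ‖ι f‖ = c ^ k := by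
  have h := PowerSeries.X_pow_order_mul_divXPowOrder (f := f)
  refine ⟨f.order.toNat, _, h.symm, ?_⟩
  have hu := PowerSeries.isUnit_divided_by_X_pow_order hf
  obtain ⟨v, hv⟩ := hu.exists_right_inv
  have h1 : ‖ι f.divXPowOrder‖ = 1 := by
    refine le_antisymm (hι _) ?_
    have : ‖ι f.divXPowOrder‖ * ‖ι v‖ = 1 := by rw [← norm_mul, ← map_mul, hv]; simp
    nlinarith [hι v, norm_nonneg (ι v), norm_nonneg (ι f.divXPowOrder)]
  conv_lhs => rw [← h]
  rw [map_mul, norm_mul, map_pow, norm_pow, hX, h1, mul_one]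

lemma dvd_iff_norm {p : ℕ} [Fact p.Prime] {F : Type*} [NormedField F] (ι : PowerSeries (ZMod p) →+* F) (c : ℝ) (hc0 : 0 < c) (hc1 : c < 1)
    (hX : ‖ι PowerSeries.X‖ = c) (hι : ∀ f, ‖ι f‖ ≤ 1) (f : PowerSeries (ZMod p)) (m : ℕ) :
    PowerSeries.X ^ m ∣ f ↔ ‖ι f‖ ≤ c ^ m := by
  constructor
  · rintro ⟨g, rfl⟩
    rw [map_mul, norm_mul, map_pow, norm_pow, hX]
    exact mul_le_of_le_one_right (by positivity) (hι g)
  · intro h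
    by_cases hf : f = 0
    · rw [hf]; exact dvd_zero _
    obtain ⟨k, u, h1, h2⟩ := norm_iota ι c hX hι f hf
    rw [h2] at h
    have : m ≤ k := (pow_le_pow_iff_right_of_lt_one₀ hc0 hc1).1 h
    rw [h1]
    exact (pow_dvd_pow _ this).mul_right _

open scoped Matrix.Norms.Elementwise in
lemma depth_exists {p N : ℕ} [Fact p.Prime] {F : Type*} [NormedField F] (ι : PowerSeries (ZMod p) →+* F) (c : ℝ) (hc0 : 0 < c) (hc1 : c < 1)
    (hX : ‖ι PowerSeries.X‖ = c) (hι : ∀ f, ‖ι f‖ ≤ 1) (M : Matrix (Fin N) (Fin N) (PowerSeries (ZMod p))) (hM : 0 < ‖M.map ι‖) :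
    ∃ k : ℕ, ‖M.map ι‖ = c ^ k ∧ Dv k M ∧ ¬ Dv (k + 1) M := by
  have hD : ∀ m, Dv m M ↔ ‖M.map ι‖ ≤ c ^ m := by
    intro m
    rw [Matrix.norm_le_iff (by positivity)]
    exact forall_congr' fun i => forall_congr' fun j => dvd_iff_norm ι c hc0 hc1 hX hι _ _
  have hne : Nonempty (Fin N × Fin N) := by
    by_contra h
    rw [not_nonempty_iff] at h
    have : ‖M.map ι‖ ≤ 0 := by
      rw [Matrix.norm_le_iff le_rfl]
      intro i j; exact h.elim (i, j)
    linarith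
  obtain ⟨⟨i, j⟩, hij⟩ := Finite.exists_max (fun x : Fin N × Fin N => ‖ι (M x.1 x.2)‖)
  have hn : ‖M.map ι‖ = ‖ι (M i j)‖ := by
    refine le_antisymm ?_ ?_
    · rw [Matrix.norm_le_iff (norm_nonneg _)]
      intro a b; exact hij (a, b)
    · exact Matrix.norm_entry_le_entrywise_sup_norm (M.map ι)
  have h0 : M i j ≠ 0 := by
    intro h; rw [hn, h] at hM; simp at hM
  obtain ⟨k, u, h1, h2⟩ := norm_iota ι c hX hι (M i j) h0
  refine ⟨k, hn.trans h2, (hD k).2 (hn.trans h2).le, ?_⟩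
  rw [hD, hn, h2]
  intro h
  have := (pow_le_pow_iff_right_of_lt_one₀ hc0 hc1).1 h
  omega

lemma rho_pow {p N : ℕ} [Fact p.Prime] [Nonempty (Fin N)] {G : Type*} [Group G] (ρ : G →* Matrix (Fin N) (Fin N) (PowerSeries (ZMod p)))
    (g : G) (r : ℕ) : ρ (g ^ (p ^ r)) = 1 + (ρ g - 1) ^ (p ^ r) := by
  haveI : CharP (PowerSeries (ZMod p)) p := charP_of_injective_algebraMap (R := ZMod p) (A := PowerSeries (ZMod p)) PowerSeries.C_injective p
  have := sub_pow_char_pow_of_commute p r (Commute.one_right (ρ g))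
  rw [this, map_pow]; simp

lemma comm_rho {G R : Type*} [Group G] [Ring R] (ρ : G →* R) (u v : G) :
    ρ (u * v * u⁻¹ * v⁻¹) - 1 = (ρ u * ρ v - ρ v * ρ u) * ρ (u⁻¹ * v⁻¹) ∧
    ρ u * ρ v - ρ v * ρ u = (ρ (u * v * u⁻¹ * v⁻¹) - 1) * ρ (v * u) := by
  have h1 : ρ (u⁻¹ * v⁻¹) * ρ (v * u) = 1 := by
    rw [← map_mul, show u⁻¹ * v⁻¹ * (v * u) = 1 by group, map_one]
  have h2 : ρ (v * u) * ρ (u⁻¹ * v⁻¹) = 1 := by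
    rw [← map_mul, show v * u * (u⁻¹ * v⁻¹) = 1 by group, map_one]
  have h3 : ρ (u * v * u⁻¹ * v⁻¹) = ρ (u * v) * ρ (u⁻¹ * v⁻¹) := by
    rw [← map_mul]; congr 1; group
  have e1 : ρ (u * v * u⁻¹ * v⁻¹) - 1 = (ρ u * ρ v - ρ v * ρ u) * ρ (u⁻¹ * v⁻¹) := by
    rw [h3, ← map_mul ρ u v, ← map_mul ρ v u, sub_mul, h2]
  refine ⟨e1, ?_⟩
  rw [e1, mul_assoc, h1, mul_one]

open scoped Matrix.Norms.Elementwise in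
theorem partF {p N : ℕ} [hp : Fact p.Prime] {G : Type*} [Group G] (ρ : G →* Matrix (Fin N) (Fin N) (PowerSeries (ZMod p)))
    (C B : ℕ) (hUB : ∀ r, (congSub ρ (p ^ r)).index ≤ C * B ^ r) (g h : G) (hg : g ∈ congSub ρ 1) (hh : h ∈ congSub ρ 1) :
    ρ (g ^ (p ^ N)) * ρ (h ^ (p ^ N)) = ρ (h ^ (p ^ N)) * ρ (g ^ (p ^ N)) := by
  classical
  by_contra hcon
  have hne : Nonempty (Fin N) := by
    by_contra h
    rw [not_nonempty_iff] at h
    exact hcon (Subsingleton.elim _ _)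
  obtain ⟨F, _, _, _, _, ι, c, hc0, hc1, hX, hι, hres⟩ := normed_field_exists p
  have hent : ∀ u ∈ congSub ρ 1, ∀ i j, ‖((ρ u - 1).map ι) i j‖ ≤ c := by
    intro u hu i j
    have := (dvd_iff_norm ι c hc0 hc1 hX hι _ 1).1 (hu i j)
    simpa using this
  set x := ρ g - 1 with hx
  set y := ρ h - 1 with hy
  obtain ⟨f1, hf1, W, e, hW, hWi, hWe⟩ := pow_expansion (p := p) hres (x.map ι) c hc1 (hent g hg)
  obtain ⟨f2, hf2, Z, e', hZ, hZi, hZe⟩ := pow_expansion (p := p) hres (y.map ι) c hc1 (hent h hh)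
  set f := f1 * f2 with hf
  have hfpos : 0 < f := Nat.mul_pos hf1 hf2
  set q := p ^ f with hq
  have hq2 : 2 ≤ q := le_trans hp.out.two_le (Nat.le_self_pow hfpos.ne' p)
  have hqa : ∀ a, q ^ a = p ^ (f * a) := fun a => (pow_mul _ _ _).symm
  let cc : F → F → Matrix (Fin N) (Fin N) F := fun w z => e w * e' z - e' z * e w
  let MM : ℕ → ℕ → Matrix (Fin N) (Fin N) (PowerSeries (ZMod p)) := fun a b =>
    x ^ (p ^ N * q ^ a) * y ^ (p ^ N * q ^ b) - y ^ (p ^ N * q ^ b) * x ^ (p ^ N * q ^ a)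
  have hmappow : ∀ (M : Matrix (Fin N) (Fin N) (PowerSeries (ZMod p))) (n : ℕ), (M ^ n).map ι = (M.map ι) ^ n := by
    intro M n
    exact map_pow (RingHom.mapMatrix ι) M n
  have hMM : ∀ a b, (MM a b).map ι = ∑ w ∈ W, ∑ z ∈ Z, (w ^ (q ^ a) * z ^ (q ^ b)) • cc w z := by
    intro a b
    have h1 : (MM a b).map ι = (x.map ι) ^ (p ^ N * q ^ a) * (y.map ι) ^ (p ^ N * q ^ b) - (y.map ι) ^ (p ^ N * q ^ b) * (x.map ι) ^ (p ^ N * q ^ a) := by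
      change (RingHom.mapMatrix ι) (MM a b) = _
      simp only [MM, map_sub, map_mul, map_pow]
      rfl
    have h2 : (x.map ι) ^ (p ^ N * q ^ a) = ∑ w ∈ W, w ^ (q ^ a) • e w := by
      have := hWe (f2 * a)
      rwa [← mul_assoc, ← hf, ← hqa] at this
    have h3 : (y.map ι) ^ (p ^ N * q ^ b) = ∑ w ∈ Z, w ^ (q ^ b) • e' w := by
      have := hZe (f1 * b)
      rwa [← mul_assoc, mul_comm f2, ← hf, ← hqa] at this
    rw [h1, h2, h3, Finset.sum_mul_sum, Finset.sum_mul_sum, Finset.sum_comm (s := Z) (t := W), ← Finset.sum_sub_distrib]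
    refine Finset.sum_congr rfl fun w _ => ?_
    rw [← Finset.sum_sub_distrib]
    refine Finset.sum_congr rfl fun z _ => ?_
    simp only [cc, smul_sub, smul_mul_assoc, mul_smul_comm, smul_smul]
    rw [mul_comm (z ^ (q ^ b))]
  have hιinj : Function.Injective ι := by
    rw [injective_iff_map_eq_zero]
    intro a ha
    by_contra h0
    obtain ⟨k, u, h1, h2⟩ := norm_iota ι c hX hι a h0
    rw [ha, norm_zero] at h2
    exact (pow_pos hc0 k).ne h2
  have hr : ∀ (u : G) (a : ℕ), ρ (u ^ (p ^ N * q ^ a)) = 1 + (ρ u - 1) ^ (p ^ N * q ^ a) := by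
    intro u a
    rw [hqa, ← pow_add]; exact rho_pow ρ u _
  have hcomm : ∀ a b, ρ (g ^ (p ^ N * q ^ a)) * ρ (h ^ (p ^ N * q ^ b)) - ρ (h ^ (p ^ N * q ^ b)) * ρ (g ^ (p ^ N * q ^ a)) = MM a b := by
    intro a b
    rw [hr, hr]
    simp only [MM, ← hx, ← hy]
    noncomm_ring
  have hnz : ∃ w ∈ W, ∃ z ∈ Z, cc w z ≠ 0 := by
    by_contra hall
    push Not at hall
    have h0 := hMM 0 0
    rw [Finset.sum_eq_zero (fun w hw => Finset.sum_eq_zero (fun z hz => by rw [hall w hw z hz, smul_zero]))] at h0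
    have h1 : MM 0 0 = 0 := by
      ext1 i j
      have := congrFun (congrFun h0 i) j
      exact hιinj (by simpa using this)
    have h2 := hcomm 0 0
    rw [h1] at h2
    simp only [pow_zero, mul_one] at h2
    exact hcon (sub_eq_zero.1 h2)
  haveI : IsUltrametricDist (Matrix (Fin N) (Fin N) F) := inferInstanceAs (IsUltrametricDist (Fin N → Fin N → F))
  obtain ⟨α, β, κ, hα, hα1, hβ, hβ1, hκ, b0, s, hdom⟩ := dominant q hq2 W Z hW hZ hWi hZi cc hnz
  obtain ⟨s', hs'⟩ := dist_depth α β hα hα1 hβ hβ1 q hq2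
  have hdepth : ∀ a b, ∃ k : ℕ, b0 ≤ b → b + (s + s') ≤ a → α ^ (q ^ a) * β ^ (q ^ b) * κ = c ^ k ∧ Dv k (MM a b) ∧ ¬ Dv (k + 1) (MM a b) := by
    intro a b
    by_cases hab : b0 ≤ b ∧ b + (s + s') ≤ a
    · have h1 := hdom b hab.1 a (by omega)
      rw [← hMM] at h1
      obtain ⟨k, h2, h3⟩ := depth_exists ι c hc0 hc1 hX hι (MM a b) (by rw [h1]; positivity)
      exact ⟨k, fun _ _ => ⟨h1.symm.trans h2, h3⟩⟩
    · exact ⟨0, fun h1 h2 => absurd ⟨h1, h2⟩ hab⟩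
  choose k hk using hdepth
  obtain ⟨n1, hn1⟩ := num1 c 1 α hc0.le hc1 hα
  obtain ⟨n2, hn2⟩ := num1 c 1 β hc0.le hc1 hβ
  obtain ⟨n3, hn3⟩ := num1 c 1 κ hc0.le hc1 hκ
  set n := n1 + n2 + n3 with hn
  have hn1' : c ^ n ≤ α := by simpa using (hn1 n (by omega)).le
  have hn2' : c ^ n ≤ β := by simpa using (hn2 n (by omega)).le
  have hn3' : c ^ n ≤ κ := by simpa using (hn3 n (by omega)).le
  refine count_contra (congSub ρ) (congSub_anti ρ) (congSub_finite ρ) p hp.out.two_le C B hUB f (3 * n) b0 (s + s') k ?_ ?_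
  · intro b hb a ha
    obtain ⟨h1, h2, h3⟩ := hk a b hb ha
    constructor
    · have hγ : ∀ m, (g ^ (p ^ N * q ^ a) * h ^ (p ^ N * q ^ b) * (g ^ (p ^ N * q ^ a))⁻¹ * (h ^ (p ^ N * q ^ b))⁻¹ ∈ congSub ρ m) ↔ Dv m (MM a b) := by
        intro m
        rw [mem_congSub]
        set u := g ^ (p ^ N * q ^ a)
        set v := h ^ (p ^ N * q ^ b)
        rw [← hcomm]
        obtain ⟨e1, e2⟩ := comm_rho ρ u v
        constructor
        · intro h; rw [e2]; exact h.mulRight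
        · intro h; rw [e1]; exact h.mulRight
      intro heq
      exact h3 ((hγ _).1 (heq ▸ (hγ _).2 h2))
    · have h4 : c ^ (n * (q ^ a + q ^ b + 1)) ≤ c ^ k a b := by
        rw [← h1]
        calc c ^ (n * (q ^ a + q ^ b + 1)) = (c ^ n) ^ (q ^ a) * (c ^ n) ^ (q ^ b) * c ^ n := by ring
          _ ≤ _ := by gcongr
      have h5 := (pow_le_pow_iff_right_of_lt_one₀ hc0 hc1).1 h4
      rw [← hqa]
      have h6 : q ^ b ≤ q ^ a := Nat.pow_le_pow_right (by omega) (by omega)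
      have h7 : 1 ≤ q ^ a := Nat.one_le_pow _ _ (by omega)
      calc k a b ≤ _ := h5
        _ ≤ n * (q ^ a + q ^ a + q ^ a) := Nat.mul_le_mul_left _ (by omega)
        _ = _ := by ring
  · intro b hb a ha b' hb' a' ha' heq
    have h1 := (hk a b hb ha).1
    have h2 := (hk a' b' hb' ha').1
    rw [heq, ← h2] at h1
    exact hs' a b a' b' (by omega) (by omega) (mul_right_cancel₀ hκ.ne' h1)


lemma comm_idx {A : Type*} [CommGroup A] [Group.FG A] (H : Subgroup A) (E : ℕ) (hE : 0 < E) (h : ∀ a : A, a ^ E ∈ H) :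
    H.index ≤ E ^ Group.rank A := by
  have h1 : Nat.card (A ⧸ H) ∣ E ^ Group.rank (A ⧸ H) := by
    apply card_dvd_exponent_pow_rank'
    intro g
    obtain ⟨a, rfl⟩ := QuotientGroup.mk_surjective g
    rw [← QuotientGroup.mk_pow]
    exact (QuotientGroup.eq_one_iff _).2 (h a)
  rw [Subgroup.index]
  refine (Nat.le_of_dvd (by positivity) h1).trans (Nat.pow_le_pow_right hE ?_)
  exact Group.rank_le_of_surjective (QuotientGroup.mk' H) (QuotientGroup.mk'_surjective H)

lemma relidx_bound {G : Type*} [Group G] (A : Subgroup G) (hA : ∀ x ∈ A, ∀ y ∈ A, x * y = y * x) (hfg : Group.FG A) :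
    ∃ d : ℕ, ∀ (H : Subgroup G) (E : ℕ), 0 < E → (∀ a : G, a ^ E ∈ H) → H.relIndex A ≤ E ^ d := by
  letI : CommGroup A := { (inferInstance : Group A) with mul_comm := fun a b => Subtype.ext (hA a a.2 b b.2) }
  haveI : Group.FG A := hfg
  refine ⟨Group.rank A, fun H E hE h => ?_⟩
  exact comm_idx (H.subgroupOf A) E hE (fun a => h a)

lemma idx_le_prod {G : Type*} [Group G] {k : ℕ} (A : Fin k → Subgroup G)
    (hprod : ∀ x : G, ∃ a : Fin k → G, (∀ i, a i ∈ A i) ∧ x = (List.ofFn a).prod) (H : Subgroup G) [H.Normal] (hH : H.index ≠ 0) :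
    H.index ≤ ∏ i, H.relIndex (A i) := by
  haveI : H.FiniteIndex := ⟨hH⟩
  have e : ∏ i, H.relIndex (A i) = Nat.card (∀ i, (A i) ⧸ (H.subgroupOf (A i))) := by
    rw [Nat.card_pi]; rfl
  rw [e, Subgroup.index]
  let φ : (∀ i, (A i) ⧸ (H.subgroupOf (A i))) → G ⧸ H := fun f => (List.ofFn (fun i => ((Quotient.out (f i) : A i) : G ⧸ H))).prod
  refine Nat.card_le_card_of_surjective φ ?_
  intro x
  obtain ⟨g, rfl⟩ := QuotientGroup.mk_surjective x
  obtain ⟨a, ha, rfl⟩ := hprod g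
  refine ⟨fun i => ((⟨a i, ha i⟩ : A i) : (A i) ⧸ (H.subgroupOf (A i))), ?_⟩
  have : ((List.ofFn a).prod : G ⧸ H) = (List.ofFn (fun i => ((a i : G) : G ⧸ H))).prod := by
    have := map_list_prod (QuotientGroup.mk' H) (List.ofFn a)
    rw [List.map_ofFn] at this
    exact this
  rw [this]
  simp only [φ]
  congr 2
  ext i
  rw [QuotientGroup.eq]
  have h1 := QuotientGroup.out_eq' ((⟨a i, ha i⟩ : A i) : (A i) ⧸ (H.subgroupOf (A i)))
  rw [QuotientGroup.eq] at h1
  exact h1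

theorem partD {p N : ℕ} [hp : Fact p.Prime] {G : Type*} [Group G] (ρ : G →* Matrix (Fin N) (Fin N) (PowerSeries (ZMod p)))
    {k : ℕ} (A : Fin k → Subgroup G) (hA : ∀ i, ∀ x ∈ A i, ∀ y ∈ A i, x * y = y * x) (hfg : ∀ i, Group.FG (A i))
    (hprod : ∀ x : G, ∃ a : Fin k → G, (∀ i, a i ∈ A i) ∧ x = (List.ofFn a).prod) :
    ∃ C B : ℕ, ∀ r, (congSub ρ (p ^ r)).index ≤ C * B ^ r := by
  choose d hd using fun i => relidx_bound (A i) (hA i) (hfg i)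
  set M := (congSub ρ 1).index with hM
  have hM0 : 0 < M := Nat.pos_of_ne_zero (congSub_finite ρ 1)
  have hexp : ∀ r (g : G), g ^ (M * p ^ r) ∈ congSub ρ (p ^ r) := by
    intro r g
    rcases isEmpty_or_nonempty (Fin N) with h | h
    · rw [mem_congSub]; intro i; exact h.elim i
    have h1 : g ^ M ∈ congSub ρ 1 := Subgroup.pow_index_mem _ g
    rw [pow_mul, mem_congSub, rho_pow, add_sub_cancel_left]
    have := Dv.pow h1 (p ^ r)
    rwa [one_mul] at this
  refine ⟨M ^ (∑ i, d i), p ^ (∑ i, d i), fun r => ?_⟩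
  refine (idx_le_prod A hprod _ (congSub_finite ρ _)).trans ?_
  calc ∏ i, (congSub ρ (p ^ r)).relIndex (A i) ≤ ∏ i, (M * p ^ r) ^ d i :=
        Finset.prod_le_prod' fun i _ => hd i _ _ (Nat.mul_pos hM0 (pow_pos hp.out.pos r)) (hexp r)
    _ = (M * p ^ r) ^ (∑ i, d i) := Finset.prod_pow_eq_pow_sum _ _ _
    _ = _ := by rw [mul_pow, ← pow_mul, ← pow_mul, mul_comm r]


lemma common_eig {F V ι : Type*} [Field F] [IsAlgClosed F] [AddCommGroup V] [Module F V] [FiniteDimensional F V]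
    (f : ι → Module.End F V) (hf : ∀ i j, Commute (f i) (f j)) (E0 : Submodule F V) (hE0 : E0 ≠ ⊥)
    (hinv : ∀ i, ∀ v ∈ E0, f i v ∈ E0) : ∃ v ∈ E0, v ≠ 0 ∧ ∀ i, ∃ μ : F, f i v = μ • v := by
  let P : Set (Submodule F V) := {E | E ≠ ⊥ ∧ E ≤ E0 ∧ ∀ i, ∀ v ∈ E, f i v ∈ E}
  obtain ⟨E, ⟨hE, hEE, hEi⟩, hmin⟩ := (wellFounded_lt (α := Submodule F V)).has_min P ⟨E0, hE0, le_rfl, hinv⟩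
  obtain ⟨v, hv, hv0⟩ := (Submodule.ne_bot_iff E).1 hE
  refine ⟨v, hEE hv, hv0, fun i => ?_⟩
  haveI : Nontrivial E := Submodule.nontrivial_iff_ne_bot.2 hE
  obtain ⟨μ, hμ⟩ := Module.End.exists_eigenvalue ((f i).restrict (hEi i))
  obtain ⟨w, hw⟩ := hμ.exists_hasEigenvector
  have hw1 : f i w = μ • (w : V) := by
    have := congrArg Subtype.val hw.apply_eq_smul
    simpa using this
  have hw0 : (w : V) ≠ 0 := fun h => hw.2 (Subtype.ext h)
  have hmem : (E ⊓ (f i).eigenspace μ) ∈ P := by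
    refine ⟨?_, inf_le_left.trans hEE, ?_⟩
    · rw [Submodule.ne_bot_iff]
      exact ⟨w, ⟨w.2, Module.End.mem_eigenspace_iff.2 hw1⟩, hw0⟩
    · rintro j u ⟨hu1, hu2⟩
      refine ⟨hEi j u hu1, ?_⟩
      simp only [SetLike.mem_coe] at hu2 ⊢
      rw [Module.End.mem_eigenspace_iff] at hu2 ⊢
      have := LinearMap.congr_fun (hf i j) u
      simp only [Module.End.mul_apply] at this
      rw [this, hu2, map_smul]
  have h1 := hmin _ hmem
  have h2 : E ⊓ (f i).eigenspace μ = E := by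
    by_contra hne
    exact h1 (lt_of_le_of_ne inf_le_left hne)
  have h3 : v ∈ E ⊓ (f i).eigenspace μ := by rw [h2]; exact hv
  exact ⟨μ, Module.End.mem_eigenspace_iff.1 h3.2⟩

def IsChar {H F : Type*} [Field F] {N : ℕ} (ρ : H → Matrix (Fin N) (Fin N) F) (χ : H → F) : Prop :=
  ∃ v : Fin N → F, v ≠ 0 ∧ ∀ a, ρ a *ᵥ v = χ a • v

lemma char_finite {H F : Type*} [Field F] {N : ℕ} (ρ : H → Matrix (Fin N) (Fin N) F)
    (hc : ∀ a b, ρ a * ρ b = ρ b * ρ a) : {χ : H → F | IsChar ρ χ}.Finite := by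
  let f : H → Module.End F (Fin N → F) := fun a => Matrix.toLin' (ρ a)
  have hf : ∀ a b, Commute (f a) (f b) := by
    intro a b
    change Matrix.toLin' (ρ a) * Matrix.toLin' (ρ b) = Matrix.toLin' (ρ b) * Matrix.toLin' (ρ a)
    rw [Module.End.mul_eq_comp, Module.End.mul_eq_comp, ← Matrix.toLin'_mul, ← Matrix.toLin'_mul, hc]
  have h1 := Module.End.independent_iInf_maxGenEigenspace_of_forall_mapsTo f
    (fun i j φ => Module.End.mapsTo_maxGenEigenspace_of_comm (hf j i) φ)
  refine (WellFoundedGT.finite_ne_bot_of_iSupIndep h1).subset ?_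
  rintro χ ⟨v, hv, h⟩
  simp only [Set.mem_ofPred_eq]
  rw [Submodule.ne_bot_iff]
  refine ⟨v, ?_, hv⟩
  rw [Module.End.mem_iInf_maxGenEigenspace_iff]
  intro a
  refine ⟨1, ?_⟩
  simp [f, h a]

lemma char_of_root {H F : Type*} [Field F] [IsAlgClosed F] {N : ℕ} (ρ : H → Matrix (Fin N) (Fin N) F)
    (hc : ∀ a b, ρ a * ρ b = ρ b * ρ a) (a : H) (μ : F) (hμ : (ρ a).charpoly.IsRoot μ) : ∃ χ, IsChar ρ χ ∧ χ a = μ := by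
  let f : H → Module.End F (Fin N → F) := fun a => Matrix.toLin' (ρ a)
  have hf : ∀ a b, Commute (f a) (f b) := by
    intro a b
    change Matrix.toLin' (ρ a) * Matrix.toLin' (ρ b) = Matrix.toLin' (ρ b) * Matrix.toLin' (ρ a)
    rw [Module.End.mul_eq_comp, Module.End.mul_eq_comp, ← Matrix.toLin'_mul, ← Matrix.toLin'_mul, hc]
  rw [← Matrix.charpoly_toLin', ← Module.End.hasEigenvalue_iff_isRoot_charpoly] at hμ
  obtain ⟨v, hv, hv0, h⟩ := common_eig f hf ((f a).eigenspace μ) hμ (by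
    intro b v hv
    rw [Module.End.mem_eigenspace_iff] at hv ⊢
    have := LinearMap.congr_fun (hf a b) v
    simp only [Module.End.mul_apply] at this
    rw [this, hv, map_smul])
  choose χ hχ using h
  refine ⟨χ, ⟨v, hv0, hχ⟩, ?_⟩
  have h1 := hχ a
  rw [Module.End.mem_eigenspace_iff.1 hv] at h1
  exact (smul_left_injective F hv0 h1).symm

lemma IsChar.isRoot {H F : Type*} [Field F] {N : ℕ} {ρ : H → Matrix (Fin N) (Fin N) F} {χ : H → F} (h : IsChar ρ χ) (a : H) :
    (ρ a).charpoly.IsRoot (χ a) := by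
  rw [← Matrix.charpoly_toLin', ← Module.End.hasEigenvalue_iff_isRoot_charpoly]
  obtain ⟨v, hv, h⟩ := h
  exact Module.End.hasEigenvalue_of_hasEigenvector (x := v) ⟨Module.End.mem_eigenspace_iff.2 (h a), hv⟩

lemma IsChar.mul {H F : Type*} [Field F] [Monoid H] {N : ℕ} {ρ : H →* Matrix (Fin N) (Fin N) F} {χ : H → F} (h : IsChar ρ χ) (a b : H) :
    χ (a * b) = χ a * χ b := by
  obtain ⟨v, hv, h⟩ := h
  refine smul_left_injective F hv ?_
  simp only
  rw [← h, map_mul, ← Matrix.mulVec_mulVec, h, Matrix.mulVec_smul, h, smul_smul, mul_comm]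

lemma IsChar.one {H F : Type*} [Field F] [Monoid H] {N : ℕ} {ρ : H →* Matrix (Fin N) (Fin N) F} {χ : H → F} (h : IsChar ρ χ) :
    χ 1 = 1 := by
  obtain ⟨v, hv, h⟩ := h
  refine smul_left_injective F hv ?_
  simp only
  rw [← h, map_one, Matrix.one_mulVec, one_smul]

lemma IsChar.pow {H F : Type*} [Field F] [Monoid H] {N : ℕ} {ρ : H →* Matrix (Fin N) (Fin N) F} {χ : H → F} (h : IsChar ρ χ) (a : H) (n : ℕ) :
    χ (a ^ n) = χ a ^ n := by
  induction n with
  | zero => simp [h.one]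
  | succ n ih => rw [pow_succ, h.mul, ih, pow_succ]

lemma unip_of_char {H F : Type*} [Field F] [IsAlgClosed F] {p : ℕ} [hp : Fact p.Prime] [CharP F p] {N : ℕ} (ρ : H → Matrix (Fin N) (Fin N) F)
    (hc : ∀ a b, ρ a * ρ b = ρ b * ρ a) (a : H) (h : ∀ χ, IsChar ρ χ → χ a = 1) : ρ a ^ (p ^ N) = 1 := by
  rcases isEmpty_or_nonempty (Fin N) with he | he
  · exact Subsingleton.elim _ _
  have hr : (ρ a).charpoly = (Polynomial.X - Polynomial.C 1) ^ N := by
    have h1 : (ρ a).charpoly = ((ρ a).charpoly.roots.map (fun a => Polynomial.X - Polynomial.C a)).prod :=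
      (IsAlgClosed.splits (ρ a).charpoly).eq_prod_roots_of_monic (Matrix.charpoly_monic _)
    have h2 : (ρ a).charpoly.roots = Multiset.replicate N 1 := by
      rw [Multiset.eq_replicate]
      constructor
      · rw [← (IsAlgClosed.splits (ρ a).charpoly).natDegree_eq_card_roots]; simp
      · intro μ hμ
        obtain ⟨χ, hχ, rfl⟩ := char_of_root ρ hc a μ (Polynomial.mem_roots'.1 hμ).2
        exact h χ hχ
    rw [h1, h2]; simp
  have h3 := Matrix.aeval_self_charpoly (ρ a)
  rw [hr] at h3
  simp only [map_one, map_pow, map_sub, Polynomial.aeval_X] at h3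
  have h4 : (ρ a - 1) ^ (p ^ N) = 0 := pow_eq_zero_of_le (Nat.lt_pow_self hp.out.one_lt).le h3
  rw [sub_pow_char_pow_of_commute p N (Commute.one_right (ρ a)), one_pow, sub_eq_zero] at h4
  exact h4

section G
variable {G F : Type*} [Group G] [Field F] {N : ℕ}

/-- common eigenspace -/
def WW (ρ : G →* Matrix (Fin N) (Fin N) F) (Nn : Subgroup G) (χ : Nn → F) : Submodule F (Fin N → F) where
  carrier := {v | ∀ c : Nn, ρ c *ᵥ v = χ c • v}
  add_mem' := by
    intro a b ha hb c
    rw [Matrix.mulVec_add, ha, hb, smul_add]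
  zero_mem' := by intro c; simp
  smul_mem' := by
    intro t v hv c
    rw [Matrix.mulVec_smul, hv, smul_comm]

def tauHom (ρ : G →* Matrix (Fin N) (Fin N) F) (Nn : Subgroup G) (χ : Nn → F) :
    Subgroup.centralizer (Nn : Set G) →* Module.End F (WW ρ Nn χ) where
  toFun g := (Matrix.toLin' (ρ g)).restrict (by
    intro v hv c
    have hg := Subgroup.mem_centralizer_iff.1 g.2 c c.2
    rw [Matrix.toLin'_apply, Matrix.mulVec_mulVec, ← map_mul, hg, map_mul, ← Matrix.mulVec_mulVec, hv c, Matrix.mulVec_smul])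
  map_one' := by ext v; simp
  map_mul' g h := by
    ext1 v
    apply Subtype.ext
    change ρ ((g * h : Subgroup.centralizer (Nn : Set G)) : G) *ᵥ (v : Fin N → F) = ρ g *ᵥ (ρ h *ᵥ (v : Fin N → F))
    rw [Subgroup.coe_mul, map_mul, Matrix.mulVec_mulVec]

lemma tauHom_scalar (ρ : G →* Matrix (Fin N) (Fin N) F) (Nn : Subgroup G) (χ : Nn → F) (z : Subgroup.centralizer (Nn : Set G))
    (hz : (z : G) ∈ Nn) : tauHom ρ Nn χ z = χ ⟨z, hz⟩ • LinearMap.id := by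
  ext1 v
  apply Subtype.ext
  have := v.2 ⟨z, hz⟩
  exact this
end G

theorem partG {G F : Type*} [Group G] [Field F] [IsAlgClosed F] {p : ℕ} [hp : Fact p.Prime] [CharP F p] {N : ℕ}
    (ρ : G →* Matrix (Fin N) (Fin N) F) (hρ : Function.Injective ρ) (htf : ∀ (g : G) (n : ℕ), 0 < n → g ^ n = 1 → g = 1)
    (Q : ℕ) (hQ : 0 < Q) (hcomm : ∀ g h : G, g ^ Q * h ^ Q = h ^ Q * g ^ Q) : 
    ∃ H : Subgroup G, H.FiniteIndex ∧ ∀ x y : ↥H, x * y = y * x := by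
  let Nn : Subgroup G := Subgroup.closure (Set.range (fun g : G => g ^ Q))
  have hNc : ∀ x ∈ Nn, ∀ y ∈ Nn, x * y = y * x := by
    intro x hx y hy
    refine Subgroup.closure_induction₂ (p := fun x y _ _ => Commute x y) ?_ ?_ ?_ ?_ ?_ ?_ ?_ hx hy
    · rintro _ _ ⟨g, rfl⟩ ⟨h, rfl⟩; exact hcomm g h
    · intro x _; exact Commute.one_left x
    · intro x _; exact Commute.one_right x
    · intro x y z _ _ _ h1 h2; exact h1.mul_left h2
    · intro x y z _ _ _ h1 h2; exact h1.mul_right h2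
    · intro x y _ _ h; exact h.inv_left
    · intro x y _ _ h; exact h.inv_right
  have hNn : ∀ g : G, ∀ c ∈ Nn, g⁻¹ * c * g ∈ Nn := by
    intro g c hc
    induction hc using Subgroup.closure_induction with
    | mem x hx =>
      obtain ⟨u, rfl⟩ := hx
      refine Subgroup.subset_closure ⟨g⁻¹ * u * g, ?_⟩
      have := conj_pow (a := g⁻¹) (b := u) (i := Q)
      simpa using this
    | one => simp
    | mul x y _ _ hx hy => 
      have : g⁻¹ * (x * y) * g = (g⁻¹ * x * g) * (g⁻¹ * y * g) := by group
      rw [this]; exact mul_mem hx hy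
    | inv x _ hx =>
      have : g⁻¹ * x⁻¹ * g = (g⁻¹ * x * g)⁻¹ := by group
      rw [this]; exact inv_mem hx
  let r : Nn →* Matrix (Fin N) (Fin N) F := ρ.comp Nn.subtype
  have hrc : ∀ a b, r a * r b = r b * r a := by
    intro a b
    rw [← map_mul, ← map_mul]; congr 1; exact Subtype.ext (hNc a a.2 b b.2)
  have hone : ∀ c : Nn, (∀ χ, IsChar r χ → χ c = 1) → c = 1 := by
    intro c hc
    have h1 := unip_of_char (p := p) r hrc c hc
    have h2 : (c : G) ^ (p ^ N) = 1 := by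
      apply hρ; rw [map_pow, map_one]; exact h1
    exact Subtype.ext (htf _ _ (pow_pos hp.out.pos N) h2)
  have hfin : {χ : Nn → F | IsChar r χ}.Finite := char_finite r hrc
  haveI := hfin.to_subtype
  let cj : G → Nn → Nn := fun g c => ⟨g⁻¹ * c * g, hNn g c c.2⟩
  have hact : ∀ (g : G) (χ : Nn → F), IsChar r χ → IsChar r (fun c => χ (cj g c)) := by
    rintro g χ ⟨v, hv, h⟩
    refine ⟨ρ g *ᵥ v, ?_, ?_⟩
    · intro h0
      apply hv
      have : ρ g⁻¹ *ᵥ (ρ g *ᵥ v) = v := by rw [Matrix.mulVec_mulVec, ← map_mul]; simp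
      rw [← this, h0, Matrix.mulVec_zero]
    · intro c
      have h1 := h (cj g c)
      have h2 : r c * ρ g = ρ g * r (cj g c) := by
        change ρ c * ρ g = ρ g * ρ (g⁻¹ * c * g)
        rw [← map_mul, ← map_mul]; congr 1; group
      rw [Matrix.mulVec_mulVec, h2, ← Matrix.mulVec_mulVec, h1, Matrix.mulVec_smul]
  let φ : G → ({χ : Nn → F | IsChar r χ} → {χ : Nn → F | IsChar r χ}) := fun g χ => ⟨fun c => χ.1 (cj g c), hact g χ.1 χ.2⟩
  let H := Subgroup.centralizer (Nn : Set G)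
  have hφ : ∀ g h, φ g = φ h → g⁻¹ * h ∈ H := by
    intro g h hgh
    rw [Subgroup.mem_centralizer_iff]
    intro c hc
    have hc' : g * c * g⁻¹ ∈ Nn := by
      have := hNn g⁻¹ c hc
      simpa using this
    have hu : (g⁻¹ * h)⁻¹ * c * (g⁻¹ * h) ∈ Nn := hNn _ c hc
    have h1 : (⟨c, hc⟩ : Nn)⁻¹ * ⟨_, hu⟩ = 1 := by
      apply hone
      intro χ hχ
      have h2 := congrFun (congrArg Subtype.val (congrFun hgh ⟨χ, hχ⟩)) ⟨_, hc'⟩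
      have h3 : cj g ⟨_, hc'⟩ = ⟨c, hc⟩ := Subtype.ext (by simp only [cj]; group)
      have h4 : cj h ⟨_, hc'⟩ = ⟨_, hu⟩ := Subtype.ext (by simp only [cj]; group)
      simp only [φ, h3, h4] at h2
      rw [hχ.mul, ← h2, ← hχ.mul, inv_mul_cancel, hχ.one]
    have h2 := congrArg Subtype.val (inv_mul_eq_one.1 h1)
    simp only at h2
    calc c * (g⁻¹ * h) = (g⁻¹ * h) * ((g⁻¹ * h)⁻¹ * c * (g⁻¹ * h)) := by group
      _ = _ := by rw [← h2]
  have hHfin : H.FiniteIndex := by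
    refine ⟨?_⟩
    rw [Subgroup.index]
    have : Finite (G ⧸ H) := by
      refine Finite.of_injective (fun x : G ⧸ H => φ x.out) ?_
      intro x y hxy
      rw [← QuotientGroup.out_eq' x, ← QuotientGroup.out_eq' y, QuotientGroup.eq]
      exact hφ _ _ hxy
    exact Nat.card_pos.ne'
  have hpow : ∀ g : G, g ^ Q ∈ Nn := fun g => Subgroup.subset_closure ⟨g, rfl⟩
  have hmul : ∀ g h : H, (g * h) ^ Q = h ^ Q * g ^ Q := by
    intro g h
    let z : H := (g * h) ^ Q * (g ^ Q)⁻¹ * (h ^ Q)⁻¹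
    have hzN : (z : G) ∈ Nn := by
      simp only [z, Subgroup.coe_mul, Subgroup.coe_inv, Subgroup.coe_pow]
      exact mul_mem (mul_mem (hpow _) (inv_mem (hpow _))) (inv_mem (hpow _))
    have hz1 : (⟨z, hzN⟩ : Nn) ^ N.factorial = 1 := by
      apply hone
      intro χ hχ
      rw [hχ.pow]
      let δ : H →* F := (LinearMap.det (M := WW ρ Nn χ) (A := F)).comp (tauHom ρ Nn χ)
      have hd1 : δ z = 1 := by
        have : δ.toHomUnits z = 1 := by
          simp only [z, map_mul, map_pow, map_inv, mul_pow]
          rw [mul_comm (_ ^ Q) (_ ^ Q)]; simp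
        have := congrArg Units.val this
        simpa using this
      have hd2 : δ z = χ ⟨z, hzN⟩ ^ Module.finrank F (WW ρ Nn χ) := by
        simp only [δ, MonoidHom.comp_apply]
        rw [tauHom_scalar ρ Nn χ z hzN]
        exact (LinearMap.det_smul _ _).trans (by simp)
      obtain ⟨v, hv, hv'⟩ := hχ
      have hpos : 0 < Module.finrank F (WW ρ Nn χ) := by
        rw [Module.finrank_pos_iff, Submodule.nontrivial_iff_ne_bot, Submodule.ne_bot_iff]
        exact ⟨v, hv', hv⟩
      have hle : Module.finrank F (WW ρ Nn χ) ≤ N := by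
        have := Submodule.finrank_le (WW ρ Nn χ)
        simpa using this
      obtain ⟨t, ht⟩ := Nat.dvd_factorial hpos hle
      rw [ht, pow_mul, ← hd2, hd1, one_pow]
    have hz : (z : G) = 1 := htf z N.factorial (Nat.factorial_pos N) (congrArg Subtype.val hz1)
    have hz' : z = 1 := Subtype.ext hz
    simp only [z, mul_inv_eq_one] at hz'
    rw [mul_inv_eq_iff_eq_mul] at hz'
    exact hz'
  refine ⟨H, hHfin, fun g h => ?_⟩
  have hgh : (g * h) ^ Q = (h * g) ^ Q := by
    rw [hmul, hmul]; exact Subtype.ext (hcomm h g)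
  have h1 := hmul (h * g)⁻¹ (g * h)
  rw [inv_pow, hgh, mul_inv_cancel] at h1
  have h2 : ((((h * g)⁻¹ * (g * h) : H)) : G) = 1 := htf _ Q hQ (congrArg Subtype.val h1)
  have h3 : (h * g)⁻¹ * (g * h) = 1 := Subtype.ext h2
  exact (inv_mul_eq_one.1 h3).symm


lemma partA1 {P K0 K : Type*} [CommRing P] [Field K0] [Field K] [Algebra P K0] [Algebra P K] [Algebra K0 K]
    [IsScalarTower P K0 K] {n : ℕ} {G : Type*} [Group G] (σ : G →* Matrix (Fin n) (Fin n) K) (hσ : Function.Injective σ)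
    (Λ : Submodule P (Fin n → K)) (hfg : Λ.FG) (hst : ∀ g, ∀ v ∈ Λ, σ g *ᵥ v ∈ Λ) (h1 : ∀ i, Pi.single i 1 ∈ Λ) :
    ∃ (N : ℕ) (ρ : G →* Matrix (Fin N) (Fin N) K0), Function.Injective ρ ∧ ∃ Λ0 : Submodule P (Fin N → K0), Λ0.FG ∧
      (∀ g, ∀ v ∈ Λ0, ρ g *ᵥ v ∈ Λ0) ∧ Submodule.span K0 (Λ0 : Set (Fin N → K0)) = ⊤ := by
  let V : Submodule K0 (Fin n → K) := Submodule.span K0 (Λ : Set (Fin n → K))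
  have hV : V.FG := by
    obtain ⟨S, hS⟩ := hfg
    refine ⟨S, ?_⟩
    simp only [V]
    rw [← hS]
    exact (Submodule.span_span_of_tower P K0 _).symm
  haveI : Module.Finite K0 V := Module.Finite.iff_fg.2 hV
  let L : G → ((Fin n → K) →ₗ[K0] (Fin n → K)) := fun g => (Matrix.mulVecLin (σ g)).restrictScalars K0
  have hL : ∀ g, ∀ v ∈ V, L g v ∈ V := by
    intro g v hv
    have : V ≤ V.comap (L g) := by
      refine Submodule.span_le.2 ?_
      intro w hw
      exact Submodule.subset_span (hst g w hw)
    exact this hv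
  let τ : G →* Module.End K0 V :=
    { toFun := fun g => (L g).restrict (hL g)
      map_one' := by
        ext1 v
        apply Subtype.ext
        change σ 1 *ᵥ (v : Fin n → K) = v
        rw [map_one, Matrix.one_mulVec]
      map_mul' := by
        intro g h
        ext1 v
        apply Subtype.ext
        change σ (g * h) *ᵥ (v : Fin n → K) = σ g *ᵥ (σ h *ᵥ (v : Fin n → K))
        rw [map_mul, Matrix.mulVec_mulVec] }
  have hτv : ∀ g (v : V), ((τ g v : V) : Fin n → K) = σ g *ᵥ (v : Fin n → K) := fun g v => rfl
  have hτ : Function.Injective τ := by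
    intro g h hgh
    apply hσ
    ext i j
    have h2 := congrArg (fun f : Module.End K0 V => ((f ⟨_, Submodule.subset_span (h1 j)⟩ : V) : Fin n → K) i) hgh
    simp only [hτv] at h2
    simpa using h2
  let b := Module.finBasis K0 V
  let e := LinearMap.toMatrixAlgEquiv b
  let ρ : G →* Matrix (Fin (Module.finrank K0 V)) (Fin (Module.finrank K0 V)) K0 := (e : Module.End K0 V →* _).comp τ
  have hρ : ∀ g (v : V), ρ g *ᵥ b.equivFun v = b.equivFun (τ g v) := by
    intro g v
    exact LinearMap.toMatrix_mulVec_repr b b (τ g) v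
  let ΛV : Submodule P V := Λ.comap (V.subtype.restrictScalars P)
  have hΛV : ΛV.FG := by
    refine Submodule.fg_of_fg_map_injective (V.subtype.restrictScalars P) Subtype.val_injective ?_
    rw [Submodule.map_comap_eq_of_le]
    · exact hfg
    · intro v hv
      exact ⟨⟨v, Submodule.subset_span hv⟩, rfl⟩
  refine ⟨_, ρ, fun g h hgh => hτ (e.injective hgh), ΛV.map (b.equivFun.toLinearMap.restrictScalars P), hΛV.map _, ?_, ?_⟩
  · rintro g _ ⟨v, hv, rfl⟩
    exact ⟨τ g v, hst g _ hv, (hρ g v).symm⟩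
  · have h2 : Submodule.span K0 (ΛV : Set V) = ⊤ := by
      have := Submodule.span_span_coe_preimage (R := K0) (s := (Λ : Set (Fin n → K)))
      exact this
    have h3 := congrArg (Submodule.map b.equivFun.toLinearMap) h2
    rw [Submodule.map_span, Submodule.map_top, LinearMap.range_eq_top.2 b.equivFun.surjective] at h3
    exact h3

theorem partA {K : Type*} [Field K] {p : ℕ} [hp : Fact p.Prime] [CharP K p] {n : ℕ} (Γ : Subgroup (GL (Fin n) K))
    (hfg : Group.FG ↥Γ) : ∃ (d N : ℕ) (ρ : Γ →* Matrix (Fin N) (Fin N) (FractionRing (MvPolynomial (Fin d) (ZMod p)))),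
      Function.Injective ρ ∧ ∃ Λ0 : Submodule (MvPolynomial (Fin d) (ZMod p)) (Fin N → FractionRing (MvPolynomial (Fin d) (ZMod p))),
      Λ0.FG ∧ (∀ g, ∀ v ∈ Λ0, ρ g *ᵥ v ∈ Λ0) ∧
      Submodule.span (FractionRing (MvPolynomial (Fin d) (ZMod p))) (Λ0 : Set (Fin N → FractionRing (MvPolynomial (Fin d) (ZMod p)))) = ⊤ := by
  obtain ⟨S, hS, hSf⟩ := Group.fg_iff.1 hfg
  letI : Algebra (ZMod p) K := ZMod.algebra K p
  let σ : Γ →* Matrix (Fin n) (Fin n) K := (Units.coeHom _).comp Γ.subtype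
  have hσ : Function.Injective σ := fun g h hgh => Subtype.ext (Units.ext hgh)
  let E : Set K := ⋃ s ∈ S, (Set.range (fun ij : Fin n × Fin n => σ s ij.1 ij.2) ∪ Set.range (fun ij : Fin n × Fin n => σ s⁻¹ ij.1 ij.2))
  have hE : E.Finite := hSf.biUnion (fun s _ => (Set.finite_range _).union (Set.finite_range _))
  let R : Subalgebra (ZMod p) K := Algebra.adjoin (ZMod p) E
  have hmat : ∀ A B : Matrix (Fin n) (Fin n) K, (∀ i j, A i j ∈ R) → (∀ i j, B i j ∈ R) → ∀ i j, (A * B) i j ∈ R := by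
    intro A B hA hB i j
    rw [Matrix.mul_apply]
    exact sum_mem (fun l _ => mul_mem (hA _ _) (hB _ _))
  have hR : ∀ g : Γ, (∀ i j, σ g i j ∈ R) ∧ (∀ i j, σ g⁻¹ i j ∈ R) := by
    intro g
    have hg : g ∈ Subgroup.closure S := by rw [hS]; trivial
    induction hg using Subgroup.closure_induction with
    | mem x hx =>
      constructor <;> intro i j <;> refine Algebra.subset_adjoin (Set.mem_biUnion hx ?_)
      · exact Or.inl ⟨(i, j), rfl⟩
      · exact Or.inr ⟨(i, j), rfl⟩
    | one =>
      have : ∀ i j, (1 : Matrix (Fin n) (Fin n) K) i j ∈ R := by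
        intro i j
        rw [Matrix.one_apply]; split_ifs
        · exact one_mem R
        · exact zero_mem R
      constructor <;> intro i j
      · rw [map_one]; exact this i j
      · rw [inv_one, map_one]; exact this i j
    | mul x y _ _ hx hy =>
      constructor
      · rw [map_mul]; exact hmat _ _ hx.1 hy.1
      · rw [_root_.mul_inv_rev, map_mul]; exact hmat _ _ hy.2 hx.2
    | inv x _ hx => rw [inv_inv]; exact ⟨hx.2, hx.1⟩
  haveI : Algebra.FiniteType (ZMod p) R := by
    rw [← Subalgebra.fg_iff_finiteType]
    exact Subalgebra.fg_def.2 ⟨E, hE, rfl⟩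
  obtain ⟨d, f, hf, hff⟩ := exists_finite_inj_algHom_of_fg (ZMod p) R
  letI : Algebra (MvPolynomial (Fin d) (ZMod p)) R := f.toRingHom.toAlgebra
  letI : Algebra (MvPolynomial (Fin d) (ZMod p)) K := (R.val.comp f).toRingHom.toAlgebra
  haveI : IsScalarTower (MvPolynomial (Fin d) (ZMod p)) R K := IsScalarTower.of_algebraMap_eq (fun x => rfl)
  haveI : FaithfulSMul (MvPolynomial (Fin d) (ZMod p)) K := by
    rw [faithfulSMul_iff_algebraMap_injective]
    exact Subtype.val_injective.comp hf
  haveI : Module.Finite (MvPolynomial (Fin d) (ZMod p)) R := hff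
  letI := FractionRing.liftAlgebra (MvPolynomial (Fin d) (ZMod p)) K
  haveI := FractionRing.isScalarTower_liftAlgebra (MvPolynomial (Fin d) (ZMod p)) K
  let j : (Fin n → R) →ₗ[MvPolynomial (Fin d) (ZMod p)] (Fin n → K) :=
    (IsScalarTower.toAlgHom (MvPolynomial (Fin d) (ZMod p)) R K).toLinearMap.compLeft (Fin n)
  have hj : ∀ v : Fin n → K, v ∈ LinearMap.range j ↔ ∀ i, v i ∈ R := by
    intro v
    constructor
    · rintro ⟨w, rfl⟩ i; exact (w i).2
    · intro h; exact ⟨fun i => ⟨v i, h i⟩, rfl⟩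
  refine ⟨d, partA1 σ hσ (LinearMap.range j) ?_ ?_ ?_⟩
  · rw [LinearMap.range_eq_map]; exact Module.Finite.fg_top.map _
  · intro g v hv
    rw [hj] at hv ⊢
    intro i
    rw [Matrix.mulVec_eq_sum, Finset.sum_apply]
    refine sum_mem (fun l _ => ?_)
    simp only [Pi.smul_apply, Matrix.transpose_apply, op_smul_eq_smul, smul_eq_mul]
    exact mul_mem (hv _) ((hR g).1 _ _)
  · intro i
    rw [hj]
    intro l
    rw [Pi.single_apply]; split_ifs
    · exact one_mem R
    · exact zero_mem R


section B1
variable {d : ℕ} {k F : Type*} [Field k] [Field F] [Algebra (MvPolynomial (Fin d) k) F] [FaithfulSMul (MvPolynomial (Fin d) k) F]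

lemma exists_val : ∃ V : ValuationSubring F,
    (∀ f g : MvPolynomial (Fin d) k, g ≠ 0 → MonomialOrder.lex.toSyn (MonomialOrder.lex.degree f) ≤ MonomialOrder.lex.toSyn (MonomialOrder.lex.degree g) →
      algebraMap _ F f / algebraMap _ F g ∈ V) ∧
    (∀ f : MvPolynomial (Fin d) k, algebraMap _ F f ∈ V → ∃ c, f = MvPolynomial.C c) := by
  let m : MonomialOrder (Fin d) := MonomialOrder.lex
  let ι := algebraMap (MvPolynomial (Fin d) k) F
  have hι : Function.Injective ι := FaithfulSMul.algebraMap_injective _ _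
  have hι0 : ∀ f, f ≠ 0 → ι f ≠ 0 := fun f hf h => hf (hι (h.trans (map_zero ι).symm))
  let O : Subring F :=
    { carrier := {x | ∃ f g, g ≠ 0 ∧ x = ι f / ι g ∧ m.toSyn (m.degree f) ≤ m.toSyn (m.degree g)}
      mul_mem' := by
        rintro _ _ ⟨f, g, hg, rfl, h⟩ ⟨f', g', hg', rfl, h'⟩
        refine ⟨f * f', g * g', mul_ne_zero hg hg', ?_, ?_⟩
        · rw [map_mul, map_mul, div_mul_div_comm]
        · refine m.degree_mul_le.trans ?_
          rw [m.degree_mul hg hg', map_add, map_add]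
          exact add_le_add h h'
      one_mem' := ⟨1, 1, one_ne_zero, by simp, le_rfl⟩
      add_mem' := by
        rintro _ _ ⟨f, g, hg, rfl, h⟩ ⟨f', g', hg', rfl, h'⟩
        refine ⟨f * g' + g * f', g * g', mul_ne_zero hg hg', ?_, ?_⟩
        · rw [map_mul, map_add, map_mul, map_mul, div_add_div _ _ (hι0 _ hg) (hι0 _ hg')]
        · refine m.degree_add_le.trans (max_le ?_ ?_)
          · refine m.degree_mul_le.trans ?_
            rw [m.degree_mul hg hg', map_add, map_add]
            exact add_le_add h le_rfl
          · refine m.degree_mul_le.trans ?_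
            rw [m.degree_mul hg hg', map_add, map_add]
            exact add_le_add le_rfl h'
      zero_mem' := ⟨0, 1, one_ne_zero, by simp, by simp⟩
      neg_mem' := by
        rintro _ ⟨f, g, hg, rfl, h⟩
        refine ⟨-f, g, hg, by rw [map_neg, neg_div], by rw [m.degree_neg]; exact h⟩ }
  have hunit : ∀ (x : O) (h : (x : F)⁻¹ ∈ O) (h0 : (x : F) ≠ 0), IsUnit x := by
    intro x h h0
    exact IsUnit.of_mul_eq_one ⟨_, h⟩ (Subtype.ext (mul_inv_cancel₀ h0))
  haveI : IsLocalRing O := by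
    refine IsLocalRing.of_isUnit_or_isUnit_one_sub_self ?_
    rintro ⟨_, f, g, hg, rfl, h⟩
    by_cases hf : f = 0
    · right
      refine hunit _ ?_ ?_
      · subst hf; simpa using O.one_mem
      · subst hf; simp
    rcases h.lt_or_eq with h | h
    · right
      have hd : m.degree (g - f) = m.degree g := m.degree_sub_of_lt h
      have hne : g - f ≠ 0 := by
        intro h0
        rw [sub_eq_zero] at h0
        rw [h0] at h; exact lt_irrefl _ h
      have he : ((1 - ⟨ι f / ι g, f, g, hg, rfl, h.le⟩ : O) : F) = ι (g - f) / ι g := by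
        change 1 - ι f / ι g = _
        rw [map_sub, sub_div, div_self (hι0 _ hg)]
      refine hunit _ ?_ ?_
      · rw [he, inv_div]
        exact ⟨g, g - f, hne, rfl, by rw [hd]⟩
      · rw [he]; exact div_ne_zero (hι0 _ hne) (hι0 _ hg)
    · left
      refine hunit _ ?_ ?_
      · exact ⟨g, f, hf, by rw [inv_div], h.ge⟩
      · exact div_ne_zero (hι0 _ hf) (hι0 _ hg)
  obtain ⟨V, hV, hloc⟩ := LocalSubring.exists_le_valuationSubring (LocalSubring.mk O)
  refine ⟨V, fun f g hg h => hV ⟨f, g, hg, rfl, h⟩, ?_⟩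
  intro f hf
  by_cases hf0 : f = 0
  · exact ⟨0, by rw [hf0, map_zero]⟩
  have h1 : (ι f)⁻¹ ∈ O := ⟨1, f, hf0, by simp, by rw [m.degree_one, map_zero]; exact m.zero_le _⟩
  have h2 : IsUnit (Subring.inclusion hV (⟨_, h1⟩ : O)) :=
    IsUnit.of_mul_eq_one ⟨_, hf⟩ (Subtype.ext (inv_mul_cancel₀ (hι0 _ hf0)))
  have h3 := hloc.map_nonunit _ h2
  obtain ⟨⟨y, hy⟩, h4⟩ := h3.exists_right_inv
  have h5 : (ι f)⁻¹ * y = 1 := congrArg Subtype.val h4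
  obtain ⟨a, b, hb, rfl, hab⟩ := hy
  have h6 : ι a = ι (f * b) := by
    have := hι0 _ hf0
    have := hι0 _ hb
    rw [map_mul]; field_simp at h5; exact h5
  have h7 := hι h6
  rw [h7, m.degree_mul hf0 hb, map_add] at hab
  have h8 : m.toSyn (m.degree f) ≤ 0 := by
    by_contra hlt
    push Not at hlt
    exact absurd hab (not_le.2 (lt_add_of_pos_left _ hlt))
  have h9 : m.degree f = 0 := by
    have := le_antisymm h8 (m.zero_le _)
    exact m.toSyn.injective (this.trans (map_zero _).symm)
  exact ⟨_, m.degree_eq_zero_iff.1 h9⟩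

end B1

lemma fg_of_hom {A T S : Type*} [CommGroup A] [CommGroup T] [Finite S] (hT : Group.FG T) (ψ : A →* (S → T))
    (hker : Finite ψ.ker) : Group.FG A := by
  haveI : Module.Finite ℤ (Additive T) := Module.Finite.iff_addGroup_fg.2 inferInstance
  haveI : IsNoetherian ℤ (Additive T) := inferInstance
  haveI : IsNoetherian ℤ (S → Additive T) := inferInstance
  let φ : Additive A →+ (S → Additive T) := 
    { toFun := fun a s => Additive.ofMul (ψ a.toMul s)
      map_zero' := by ext s; simp
      map_add' := by intro a b; ext s; simp }
  let f : Additive A →ₗ[ℤ] (S → Additive T) := φ.toIntLinearMap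
  have h1 : (⊤ : Submodule ℤ (Additive A)).FG := by
    refine Submodule.fg_of_fg_map_of_fg_inf_ker f (IsNoetherian.noetherian _) ?_
    have hfin : (LinearMap.ker f : Set (Additive A)).Finite := by
      have h2 : (ψ.ker : Set A).Finite := hker
      refine (h2.image Additive.ofMul).subset ?_
      intro a ha
      refine ⟨a.toMul, ?_, rfl⟩
      have h3 : f a = 0 := ha
      change ψ a.toMul = 1
      funext s
      exact congrFun h3 s
    refine ⟨hfin.toFinset, ?_⟩
    rw [Set.Finite.coe_toFinset, Submodule.span_eq, top_inf_eq]
  have h2 : AddGroup.FG (Additive A) := Module.Finite.iff_addGroup_fg.1 ⟨h1⟩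
  exact GroupFG.iff_add_fg.2 h2


lemma aeval_mulVec {P F : Type*} [CommRing P] [CommRing F] [Algebra P F] {N : ℕ} (M : Matrix (Fin N) (Fin N) F)
    (v : Fin N → F) (μ : F) (h : M *ᵥ v = μ • v) (q : Polynomial P) :
    (Polynomial.aeval M q) *ᵥ v = (Polynomial.aeval μ q) • v := by
  have hpow : ∀ n : ℕ, (M ^ n) *ᵥ v = μ ^ n • v := by
    intro n
    induction n with
    | zero => simp
    | succ n ih => rw [pow_succ, ← Matrix.mulVec_mulVec, h, Matrix.mulVec_smul, ih, smul_smul, pow_succ, mul_comm]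
  induction q using Polynomial.induction_on' with
  | add p q hp hq => rw [map_add, map_add, Matrix.add_mulVec, hp, hq, add_smul]
  | monomial n a =>
    rw [Polynomial.aeval_monomial, Polynomial.aeval_monomial, ← Algebra.smul_def, ← Algebra.smul_def, Matrix.smul_mulVec, hpow, smul_assoc]

lemma isIntegral_eig {P F : Type*} [CommRing P] [Field F] [Algebra P F] {N : ℕ} (M : Matrix (Fin N) (Fin N) F) (hM : IsIntegral P M)
    (v : Fin N → F) (hv : v ≠ 0) (μ : F) (h : M *ᵥ v = μ • v) : IsIntegral P μ := by
  obtain ⟨q, hq, h0⟩ := hM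
  refine ⟨q, hq, ?_⟩
  have h1 := aeval_mulVec M v μ h q
  rw [Polynomial.aeval_def, h0, Matrix.zero_mulVec] at h1
  exact (smul_eq_zero.1 h1.symm).resolve_right hv

lemma isIntegral_mat {P K0 : Type*} [CommRing P] [Field K0] [Algebra P K0] {N : ℕ} (M : Matrix (Fin N) (Fin N) K0) 
    (Λ0 : Submodule P (Fin N → K0)) (hfg : Λ0.FG) (hst : ∀ v ∈ Λ0, M *ᵥ v ∈ Λ0)
    (hspan : Submodule.span K0 (Λ0 : Set (Fin N → K0)) = ⊤) : IsIntegral P M := by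
  let e : Module.End P Λ0 := ((Matrix.mulVecLin M).restrictScalars P).restrict hst
  haveI : Module.Finite P Λ0 := Module.Finite.iff_fg.2 hfg
  obtain ⟨q, hq, h0⟩ := LinearMap.exists_monic_and_aeval_eq_zero P e
  refine ⟨q, hq, ?_⟩
  rw [← Polynomial.aeval_def]
  have hpow : ∀ (n : ℕ) (v : Λ0), (((e ^ n) v : Λ0) : Fin N → K0) = (M ^ n) *ᵥ (v : Fin N → K0) := by
    intro n
    induction n with
    | zero => intro v; simp
    | succ n ih =>
      intro v
      rw [pow_succ, pow_succ, Module.End.mul_apply, ih, ← Matrix.mulVec_mulVec]; rfl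
  have hav : ∀ (q : Polynomial P) (v : Λ0), ((Polynomial.aeval e q v : Λ0) : Fin N → K0) = (Polynomial.aeval M q) *ᵥ (v : Fin N → K0) := by
    intro q v
    induction q using Polynomial.induction_on' with
    | add p q hp hq => rw [map_add, map_add, Matrix.add_mulVec, LinearMap.add_apply, Submodule.coe_add, hp, hq]
    | monomial n a =>
      rw [Polynomial.aeval_monomial, Polynomial.aeval_monomial, ← Algebra.smul_def, ← Algebra.smul_def, Matrix.smul_mulVec, LinearMap.smul_apply, Submodule.coe_smul, hpow]
  have h3 : Matrix.mulVecLin (Polynomial.aeval M q) = Matrix.mulVecLin 0 := by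
    refine LinearMap.ext_on hspan (fun v hv => ?_)
    have := hav q ⟨v, hv⟩
    rw [h0] at this
    rw [Matrix.mulVecLin_apply, ← this]; simp
  exact Matrix.toLin'.injective h3

lemma root_val {F K0 : Type*} [Field F] [Field K0] [Algebra K0 F] (V : ValuationSubring F) (T : Subgroup (V.ValueGroup)ˣ)
    (hT : ∀ (x : K0) (hx : x ≠ 0) (y : V.ValueGroupˣ), (y : V.ValueGroup) = V.valuation (algebraMap K0 F x) → y ∈ T)
    (q : Polynomial K0) (hq : q.Monic) (x : F) (hx : Polynomial.aeval x q = 0) (y : V.ValueGroupˣ) (hy : (y : V.ValueGroup) = V.valuation x) :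
    y ^ (q.natDegree.factorial) ∈ T := by
  have key : ∀ i j, i < j → j ≤ q.natDegree → V.valuation (algebraMap K0 F (q.coeff i) * x ^ i) = V.valuation (algebraMap K0 F (q.coeff j) * x ^ j) →
      V.valuation (algebraMap K0 F (q.coeff i) * x ^ i) ≠ 0 → y ^ (q.natDegree.factorial) ∈ T := by
    intro i j hij hj he h0
    have hci : q.coeff i ≠ 0 := by
      rintro h; rw [h] at h0; simp at h0
    have hcj : q.coeff j ≠ 0 := by
      rintro h; rw [he, h] at h0; simp at h0
    have h1 : y ^ (j - i) ∈ T := by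
      refine hT (q.coeff i / q.coeff j) (div_ne_zero hci hcj) _ ?_
      have hvj : V.valuation (algebraMap K0 F (q.coeff j)) ≠ 0 := by
        rw [(Valuation.ne_zero_iff _)]; simpa using hcj
      have hyi : (y : V.ValueGroup) ^ i ≠ 0 := pow_ne_zero _ y.ne_zero
      rw [map_div₀, map_div₀, Units.val_pow_eq_pow_val, eq_div_iff hvj]
      rw [map_mul, map_mul, map_pow, map_pow, ← hy] at he
      apply mul_right_cancel₀ hyi
      rw [he, mul_right_comm, ← pow_add, Nat.sub_add_cancel hij.le, mul_comm]
    obtain ⟨t, ht⟩ := Nat.dvd_factorial (Nat.sub_pos_of_lt hij) ((Nat.sub_le j i).trans hj)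
    rw [ht, pow_mul]
    exact T.pow_mem h1 t
  obtain ⟨i, hi, hmax⟩ := Finset.exists_max_image (Finset.range (q.natDegree + 1)) (fun i => V.valuation (algebraMap K0 F (q.coeff i) * x ^ i)) ⟨0, by simp⟩
  have hne : V.valuation (algebraMap K0 F (q.coeff i) * x ^ i) ≠ 0 := by
    intro h
    have h1 := hmax q.natDegree (by simp)
    rw [h, hq.coeff_natDegree, map_one, one_mul, map_pow, ← hy] at h1
    exact pow_ne_zero _ y.ne_zero (le_zero_iff.1 h1)
  have hex : ∃ j ∈ Finset.range (q.natDegree + 1), j ≠ i ∧ V.valuation (algebraMap K0 F (q.coeff j) * x ^ j) = V.valuation (algebraMap K0 F (q.coeff i) * x ^ i) := by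
    by_contra hcon
    push Not at hcon
    rw [Polynomial.aeval_eq_sum_range] at hx
    simp only [Algebra.smul_def] at hx
    rw [← Finset.add_sum_erase _ _ hi] at hx
    have h2 := Valuation.map_sum_lt V.valuation (s := (Finset.range (q.natDegree + 1)).erase i) (f := fun j => algebraMap K0 F (q.coeff j) * x ^ j) hne (by
      intro j hj
      exact lt_of_le_of_ne (hmax j (Finset.mem_of_mem_erase hj)) (hcon j (Finset.mem_of_mem_erase hj) (Finset.ne_of_mem_erase hj)))
    rw [← neg_eq_of_add_eq_zero_right hx, Valuation.map_neg] at h2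
    exact lt_irrefl _ h2
  obtain ⟨j, hj, hji, he⟩ := hex
  rw [Finset.mem_range] at hi hj
  rcases lt_or_gt_of_ne hji with h | h
  · exact key j i h (by omega) he (by rw [he]; exact hne)
  · exact key i j h (by omega) he.symm hne

lemma val_fg {d : ℕ} {k K0 F : Type*} [Field k] [Field F] [Field K0] [Algebra (MvPolynomial (Fin d) k) F] [FaithfulSMul (MvPolynomial (Fin d) k) F]
    [Algebra (MvPolynomial (Fin d) k) K0] [IsFractionRing (MvPolynomial (Fin d) k) K0] [Algebra K0 F] [IsScalarTower (MvPolynomial (Fin d) k) K0 F]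
    (V : ValuationSubring F) 
    (hV : ∀ f g : MvPolynomial (Fin d) k, g ≠ 0 → MonomialOrder.lex.toSyn (MonomialOrder.lex.degree f) ≤ MonomialOrder.lex.toSyn (MonomialOrder.lex.degree g) →
      algebraMap _ F f / algebraMap _ F g ∈ V) : ∃ T : Subgroup (V.ValueGroup)ˣ, T.FG ∧ 
    (∀ (x : K0) (_ : x ≠ 0) (y : V.ValueGroupˣ), (y : V.ValueGroup) = V.valuation (algebraMap K0 F x) → y ∈ T) := by
  let m : MonomialOrder (Fin d) := MonomialOrder.lex
  let ι := algebraMap (MvPolynomial (Fin d) k) F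
  have hι : Function.Injective ι := FaithfulSMul.algebraMap_injective _ _
  have hι0 : ∀ f, f ≠ 0 → ι f ≠ 0 := fun f hf h => hf (hι (h.trans (map_zero ι).symm))
  let u : Fˣ →* V.ValueGroupˣ := Units.map V.valuation.toMonoidWithZeroHom.toMonoidHom
  have hu : ∀ x : Fˣ, ((u x : V.ValueGroupˣ) : V.ValueGroup) = V.valuation x := fun x => rfl
  let T : Subgroup (V.ValueGroup)ˣ := Subgroup.closure (Set.range fun i : Fin d => u (Units.mk0 (ι (MvPolynomial.X i)) (hι0 _ (MvPolynomial.X_ne_zero i))))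
  have hT : T.FG := (Subgroup.fg_iff _).2 ⟨_, rfl, Set.finite_range _⟩
  have hmon : ∀ (s : Fin d →₀ ℕ) (y : V.ValueGroupˣ), (y : V.ValueGroup) = V.valuation (ι (MvPolynomial.monomial s 1)) → y ∈ T := by
    intro s y hy
    have : y = ∏ i : Fin d, (u (Units.mk0 (ι (MvPolynomial.X i)) (hι0 _ (MvPolynomial.X_ne_zero i)))) ^ (s i) := by
      apply Units.ext
      rw [hy, MvPolynomial.monomial_eq, Finsupp.prod_fintype _ _ (by simp)]
      simp only [map_one, one_mul, map_prod, map_pow, Units.coe_prod, Units.val_pow_eq_pow_val]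
      rfl
    rw [this]
    exact T.prod_mem (fun i _ => T.pow_mem (Subgroup.subset_closure ⟨i, rfl⟩) _)
  have hf : ∀ (f : MvPolynomial (Fin d) k), f ≠ 0 → ∀ (y : V.ValueGroupˣ), (y : V.ValueGroup) = V.valuation (ι f) → y ∈ T := by
    intro f hf y hy
    refine hmon (m.degree f) y ?_
    rw [hy]
    have hd : m.degree (MvPolynomial.monomial (m.degree f) (1 : k)) = m.degree f := by
      classical
      rw [m.degree_monomial]; simp
    have hm0 : MvPolynomial.monomial (m.degree f) (1 : k) ≠ 0 := by
      rw [Ne, MvPolynomial.monomial_eq_zero]; exact one_ne_zero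
    have h1 := hV f _ hm0 (by change m.toSyn _ ≤ m.toSyn _; rw [hd])
    have h2 := hV _ f hf (by change m.toSyn (m.degree (MvPolynomial.monomial (m.degree f) (1 : k))) ≤ m.toSyn _; rw [hd])
    rw [← V.valuation_le_one_iff, map_div₀] at h1 h2
    have e1 : 0 < V.valuation (ι f) := by rw [zero_lt_iff, Valuation.ne_zero_iff]; exact hι0 _ hf
    have e2 : 0 < V.valuation (ι (MvPolynomial.monomial (m.degree f) (1 : k))) := by rw [zero_lt_iff, Valuation.ne_zero_iff]; exact hι0 _ hm0
    exact le_antisymm ((div_le_one₀ e2).1 h1) ((div_le_one₀ e1).1 h2)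
  refine ⟨T, hT, ?_⟩
  intro x hx y hy
  obtain ⟨f, g, hg, rfl⟩ := IsFractionRing.div_surjective (A := MvPolynomial (Fin d) k) x
  have hg0 : g ≠ 0 := nonZeroDivisors.ne_zero hg
  have hf0 : f ≠ 0 := by rintro rfl; simp at hx
  rw [map_div₀, ← IsScalarTower.algebraMap_apply, ← IsScalarTower.algebraMap_apply] at hy
  have h1 := hf f hf0 (u (Units.mk0 _ (hι0 _ hf0))) rfl
  have h2 := hf g hg0 (u (Units.mk0 _ (hι0 _ hg0))) rfl
  have : y = u (Units.mk0 _ (hι0 _ hf0)) / u (Units.mk0 _ (hι0 _ hg0)) := by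
    apply Units.ext
    rw [hy, map_div₀, Units.val_div_eq_div_val]; rfl
  rw [this]; exact T.div_mem h1 h2


lemma coeff_mem_of_roots {F : Type*} [Field F] (T : Subring F) (s : Multiset F) (hs : ∀ x ∈ s, x ∈ T) (i : ℕ) :
    ((s.map (fun a => Polynomial.X - Polynomial.C a)).prod).coeff i ∈ T := by
  have h : (s.map (fun a => Polynomial.X - Polynomial.C a)).prod ∈ Polynomial.liftsRing T.subtype := by
    refine Subring.multiset_prod_mem _ _ ?_
    intro q hq
    obtain ⟨a, ha, rfl⟩ := Multiset.mem_map.1 hq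
    refine Subring.sub_mem _ ?_ ?_
    · exact Polynomial.X_mem_lifts _
    · exact Polynomial.C_mem_lifts T.subtype ⟨a, hs a ha⟩
  have h2 := (Polynomial.lifts_iff_coeff_lifts _).1 h i
  obtain ⟨y, hy⟩ := h2
  rw [← hy]; exact y.2

theorem partB1 {p : ℕ} [hp : Fact p.Prime] {d N : ℕ} {K0 F : Type*} [Field F] [IsAlgClosed F] [CharP F p] [Field K0] [Algebra (MvPolynomial (Fin d) (ZMod p)) F]
    [Algebra (MvPolynomial (Fin d) (ZMod p)) K0] [IsFractionRing (MvPolynomial (Fin d) (ZMod p)) K0] [Algebra K0 F] [IsScalarTower (MvPolynomial (Fin d) (ZMod p)) K0 F]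
    {A : Type*} [CommGroup A] (htor : ∀ a : A, a ^ p = 1 → a = 1) (ρ : A →* Matrix (Fin N) (Fin N) K0) (hρ : Function.Injective ρ)
    (hint : ∀ a, IsIntegral (MvPolynomial (Fin d) (ZMod p)) (ρ a)) : Group.FG A := by
  have hKF : Function.Injective (algebraMap K0 F) := (algebraMap K0 F).injective
  haveI : FaithfulSMul (MvPolynomial (Fin d) (ZMod p)) F := by
    rw [faithfulSMul_iff_algebraMap_injective, IsScalarTower.algebraMap_eq _ K0 F]
    exact hKF.comp (IsFractionRing.injective _ K0)
  let r : A →* Matrix (Fin N) (Fin N) F := ((algebraMap K0 F).mapMatrix (m := Fin N)).toMonoidHom.comp ρ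
  have hr : Function.Injective r := by
    intro a b hab
    apply hρ
    exact Matrix.map_injective hKF hab
  have hchar : ∀ a, (r a).charpoly = (ρ a).charpoly.map (algebraMap K0 F) := fun a => Matrix.charpoly_map _ _
  have hrc : ∀ a b, r a * r b = r b * r a := by
    intro a b; rw [← map_mul, ← map_mul, mul_comm]
  have htor' : ∀ (n : ℕ) (a : A), a ^ (p ^ n) = 1 → a = 1 := by
    intro n
    induction n with
    | zero => intro a h; simpa using h
    | succ n ih => intro a h; rw [pow_succ, pow_mul] at h; exact ih a (htor _ h)
  have hrint : ∀ a, IsIntegral (MvPolynomial (Fin d) (ZMod p)) (r a) := by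
    intro a
    exact (hint a).map ((IsScalarTower.toAlgHom (MvPolynomial (Fin d) (ZMod p)) K0 F).mapMatrix (m := Fin N))
  have hχint : ∀ χ, IsChar r χ → ∀ a, IsIntegral (MvPolynomial (Fin d) (ZMod p)) (χ a) := by
    rintro χ ⟨v, hv, h⟩ a
    exact isIntegral_eig _ (hrint a) v hv _ (h a)
  obtain ⟨V, hV1, hV2⟩ := exists_val (d := d) (k := ZMod p) (F := F)
  obtain ⟨T, hT, hTm⟩ := val_fg (K0 := K0) V hV1
  have hfin : {χ : A → F | IsChar r χ}.Finite := char_finite r hrc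
  haveI := hfin.to_subtype
  have hχne : ∀ χ, IsChar r χ → ∀ a, χ a ≠ 0 := by
    intro χ hχ a h0
    have := hχ.mul a a⁻¹
    rw [mul_inv_cancel, hχ.one, h0, zero_mul] at this
    exact one_ne_zero this
  let w : {χ : A → F | IsChar r χ} → A →* V.ValueGroupˣ := fun χ =>
    MonoidHom.toHomUnits
    { toFun := fun a => V.valuation (χ.1 a)
      map_one' := by rw [IsChar.one χ.2, map_one]
      map_mul' := by intro a b; rw [IsChar.mul χ.2, map_mul] }
  have hw : ∀ χ a, ((w χ a : V.ValueGroupˣ) : V.ValueGroup) = V.valuation (χ.1 a) := fun χ a => rfl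
  have hwT : ∀ χ a, (w χ a) ^ N.factorial ∈ T := by
    intro χ a
    have h1 := root_val V T hTm (ρ a).charpoly (Matrix.charpoly_monic _) (χ.1 a) (by
      have := IsChar.isRoot χ.2 a
      rw [hchar, Polynomial.IsRoot.def, Polynomial.eval_map] at this
      exact this) (w χ a) (hw χ a)
    rw [Matrix.charpoly_natDegree_eq_dim, Fintype.card_fin] at h1
    exact h1
  let ψ : A →* ({χ : A → F | IsChar r χ} → T) :=
    { toFun := fun a χ => ⟨(w χ a) ^ N.factorial, hwT χ a⟩
      map_one' := by funext χ; apply Subtype.ext; simp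
      map_mul' := by intro a b; funext χ; apply Subtype.ext; simp [mul_pow] }
  have hTG : Group.FG T := (Group.fg_iff_subgroup_fg T).2 hT
  refine fg_of_hom hTG ψ ?_
  have hkerV : ∀ a ∈ ψ.ker, ∀ χ, IsChar r χ → χ a ∈ V := by
    intro a ha χ hχ
    have h1 : (w ⟨χ, hχ⟩ a) ^ N.factorial = 1 := congrArg Subtype.val (congrFun ha ⟨χ, hχ⟩)
    have h2 := congrArg Units.val h1
    rw [Units.val_pow_eq_pow_val, hw, Units.val_one] at h2
    rw [← V.valuation_le_one_iff]
    by_contra hlt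
    exact absurd h2 (one_lt_pow₀ (not_le.1 hlt) (Nat.factorial_pos N).ne').ne'
  -- finitely many charpolys
  let cc : ZMod p → K0 := fun c => algebraMap (MvPolynomial (Fin d) (ZMod p)) K0 (MvPolynomial.C c)
  let Z : Set (Polynomial F) := Set.range (fun c : Fin (N + 1) → ZMod p => ∑ i : Fin (N + 1), Polynomial.monomial (i : ℕ) (algebraMap K0 F (cc (c i))))
  have hZ : Z.Finite := Set.finite_range _
  have hcp : ∀ a ∈ ψ.ker, (r a).charpoly ∈ Z := by
    intro a ha
    have hco : ∀ i, ∃ c : ZMod p, (r a).charpoly.coeff i = algebraMap K0 F (cc c) := by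
      intro i
      have h1 : (r a).charpoly = ((r a).charpoly.roots.map (fun a => Polynomial.X - Polynomial.C a)).prod :=
        (IsAlgClosed.splits (r a).charpoly).eq_prod_roots_of_monic (Matrix.charpoly_monic _)
      have h2 : (r a).charpoly.coeff i ∈ (integralClosure (MvPolynomial (Fin d) (ZMod p)) F).toSubring ⊓ V.toSubring := by
        rw [h1]
        refine coeff_mem_of_roots _ _ ?_ i
        intro μ hμ
        obtain ⟨χ, hχ, rfl⟩ := char_of_root r hrc a μ (Polynomial.mem_roots'.1 hμ).2
        exact ⟨hχint χ hχ a, hkerV a ha χ hχ⟩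
      obtain ⟨h3, h4⟩ := h2
      rw [hchar, Polynomial.coeff_map] at h3 h4 ⊢
      have h5 : IsIntegral (MvPolynomial (Fin d) (ZMod p)) (algebraMap K0 F ((ρ a).charpoly.coeff i)) := h3
      rw [isIntegral_algebraMap_iff hKF, IsIntegrallyClosed.isIntegral_iff] at h5
      obtain ⟨f, hf⟩ := h5
      have h6 : algebraMap K0 F ((ρ a).charpoly.coeff i) ∈ V := h4
      rw [← hf, ← IsScalarTower.algebraMap_apply] at h6
      obtain ⟨c, rfl⟩ := hV2 f h6
      exact ⟨c, by rw [← hf]⟩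
    choose c hc using hco
    refine ⟨fun i => c i, ?_⟩
    simp only
    rw [Polynomial.as_sum_range' (r a).charpoly (N + 1) (by rw [Matrix.charpoly_natDegree_eq_dim, Fintype.card_fin]; omega), Finset.sum_range]
    exact Finset.sum_congr rfl (fun i _ => by rw [hc])
  let U : Set F := ⋃ q ∈ Z, (q.rootSet F)
  have hU : U.Finite := hZ.biUnion (fun q _ => Polynomial.rootSet_finite q F)
  haveI := hU.to_subtype
  have hmem : ∀ (a : ψ.ker) (χ : {χ : A → F | IsChar r χ}), χ.1 a ∈ U := by
    intro a χ
    refine Set.mem_biUnion (hcp a a.2) ?_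
    rw [Polynomial.mem_rootSet]
    refine ⟨(Matrix.charpoly_monic _).ne_zero, ?_⟩
    have := IsChar.isRoot χ.2 a
    simpa using this
  refine Finite.of_injective (fun (a : ψ.ker) (χ : {χ : A → F | IsChar r χ}) => (⟨χ.1 a, hmem a χ⟩ : U)) ?_
  intro a b hab
  apply Subtype.ext
  have h1 : r ((a : A) * (b : A)⁻¹) ^ (p ^ N) = 1 := by
    refine unip_of_char (p := p) r hrc _ ?_
    intro χ hχ
    have h2 : χ a = χ b := congrArg Subtype.val (congrFun hab ⟨χ, hχ⟩)
    rw [hχ.mul, h2, ← hχ.mul, mul_inv_cancel, hχ.one]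
  rw [← map_pow, ← map_one r] at h1
  exact mul_inv_eq_one.1 (htor' _ _ (hr h1))

theorem partB {p : ℕ} [hp : Fact p.Prime] {G : Type*} [Group G] (htor : ∀ a : G, a ^ p = 1 → a = 1) {d N : ℕ} (ρ : G →* Matrix (Fin N) (Fin N) (FractionRing (MvPolynomial (Fin d) (ZMod p))))
    (hρ : Function.Injective ρ)
    (Λ0 : Submodule (MvPolynomial (Fin d) (ZMod p)) (Fin N → FractionRing (MvPolynomial (Fin d) (ZMod p)))) (hfg : Λ0.FG) (hst : ∀ g, ∀ v ∈ Λ0, ρ g *ᵥ v ∈ Λ0)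
    (hspan : Submodule.span (FractionRing (MvPolynomial (Fin d) (ZMod p))) (Λ0 : Set (Fin N → FractionRing (MvPolynomial (Fin d) (ZMod p)))) = ⊤)
    (A : Subgroup G) (hA : ∀ x ∈ A, ∀ y ∈ A, x * y = y * x) : Group.FG A := by
  letI : CommGroup A := { (inferInstance : Group A) with mul_comm := fun x y => Subtype.ext (hA x x.2 y y.2) }
  haveI : CharP (FractionRing (MvPolynomial (Fin d) (ZMod p))) p := 
    charP_of_injective_algebraMap (IsFractionRing.injective (MvPolynomial (Fin d) (ZMod p)) _) p
  haveI : CharP (AlgebraicClosure (FractionRing (MvPolynomial (Fin d) (ZMod p)))) p :=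
    charP_of_injective_algebraMap (algebraMap (FractionRing (MvPolynomial (Fin d) (ZMod p))) _).injective p
  refine partB1 (p := p) (d := d) (F := AlgebraicClosure (FractionRing (MvPolynomial (Fin d) (ZMod p)))) ?_ (ρ.comp A.subtype) ?_ ?_
  · intro a ha
    exact Subtype.ext (htor a (congrArg Subtype.val ha))
  · exact hρ.comp Subtype.val_injective
  · intro a
    exact isIntegral_mat _ Λ0 hfg (hst a) hspan


lemma exists_pows_indep (p : ℕ) [hp : Fact p.Prime] (d : ℕ) :
    ∃ φ : MvPolynomial (Fin d) (ZMod p) →+* PowerSeries (ZMod p), Function.Injective φ := by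
  obtain ⟨s, hs⟩ := exists_isTranscendenceBasis (ZMod p) (PowerSeries (ZMod p))
  have hinf : Infinite s := by
    by_contra hfin
    rw [not_infinite_iff_finite] at hfin
    haveI := hs.isAlgebraic
    have h1 := Algebra.IsAlgebraic.cardinalMk_le_max (Algebra.adjoin (ZMod p) (Set.range (Subtype.val : s → PowerSeries (ZMod p)))) (PowerSeries (ZMod p))
    have h2 := Algebra.cardinalMk_adjoin_le (ZMod p) (Set.range (Subtype.val : s → PowerSeries (ZMod p)))
    have h3 : Cardinal.mk (PowerSeries (ZMod p)) ≤ Cardinal.aleph0 := by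
      refine h1.trans (max_le (h2.trans (max_le (max_le ?_ ?_) le_rfl)) le_rfl)
      · exact Cardinal.mk_le_aleph0
      · rw [Subtype.range_coe]; exact Cardinal.mk_le_aleph0
    have h4 : Function.Injective (fun f : ℕ → Bool => PowerSeries.mk (fun n => if f n then (1 : ZMod p) else 0)) := by
      intro f g hfg
      funext n
      have := congrArg (PowerSeries.coeff n) hfg
      simp only [PowerSeries.coeff_mk] at this
      cases hf : f n <;> cases hg : g n <;> simp_all
    have h5 := (Cardinal.mk_le_of_injective h4).trans h3
    have h6 : Cardinal.mk (ℕ → Bool) = 2 ^ Cardinal.aleph0 := by simp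
    rw [h6] at h5
    exact absurd (Cardinal.cantor Cardinal.aleph0) (not_lt.2 h5)
  have h := hs.1.comp (fun i : Fin d => Infinite.natEmbedding s i) (fun i j hij => Fin.ext ((Infinite.natEmbedding s).injective hij))
  exact ⟨(MvPolynomial.aeval _ : _ →ₐ[ZMod p] _).toRingHom, h⟩

lemma partC1 {P O K0 E : Type*} [CommRing P] [CommRing O] [IsDomain O] [IsPrincipalIdealRing O] [Field K0] [Field E] [Algebra P O] [Algebra P E] [Algebra O E]
    [FaithfulSMul O E] [Algebra P K0] [Algebra K0 E] [IsScalarTower P K0 E] [IsScalarTower P O E]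
    {N : ℕ} {G : Type*} [Group G] (ρ : G →* Matrix (Fin N) (Fin N) K0) (hρ : Function.Injective ρ)
    (Λ0 : Submodule P (Fin N → K0)) (hfg : Λ0.FG) (hst : ∀ g, ∀ v ∈ Λ0, ρ g *ᵥ v ∈ Λ0)
    (hspan : Submodule.span K0 (Λ0 : Set (Fin N → K0)) = ⊤) :
    ∃ (N' : ℕ) (ρ' : G →* Matrix (Fin N') (Fin N') O), Function.Injective ρ' := by
  let j : (Fin N → K0) →ₗ[P] (Fin N → E) := (IsScalarTower.toAlgHom P K0 E).toLinearMap.compLeft (Fin N)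
  have hj : ∀ v i, j v i = algebraMap K0 E (v i) := fun v i => rfl
  let σ : G →* Matrix (Fin N) (Fin N) E := ((algebraMap K0 E).mapMatrix (m := Fin N)).toMonoidHom.comp ρ
  have hσj : ∀ g v, σ g *ᵥ j v = j (ρ g *ᵥ v) := by
    intro g v
    ext i
    rw [hj, RingHom.map_mulVec]
    rfl
  let V : Submodule O (Fin N → E) := Submodule.span O (Λ0.map j : Set (Fin N → E))
  have hV : V.FG := by
    obtain ⟨S, hS⟩ := hfg.map j
    refine ⟨S, ?_⟩
    simp only [V]
    rw [← hS]
    exact (Submodule.span_span_of_tower P O _).symm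
  haveI : Module.Finite O V := Module.Finite.iff_fg.2 hV
  haveI : Module.IsTorsionFree O E := inferInstance
  haveI : Module.Free O V := inferInstance
  let L : G → ((Fin N → E) →ₗ[O] (Fin N → E)) := fun g => (Matrix.mulVecLin (σ g)).restrictScalars O
  have hL : ∀ g, ∀ v ∈ V, L g v ∈ V := by
    intro g v hv
    have : V ≤ V.comap (L g) := by
      refine Submodule.span_le.2 ?_
      rintro _ ⟨w, hw, rfl⟩
      refine Submodule.subset_span ?_
      refine ⟨_, hst g w hw, (hσj g w).symm⟩
    exact this hv
  let τ : G →* Module.End O V :=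
    { toFun := fun g => (L g).restrict (hL g)
      map_one' := by
        ext1 v
        apply Subtype.ext
        change σ 1 *ᵥ (v : Fin N → E) = v
        rw [map_one, Matrix.one_mulVec]
      map_mul' := by
        intro g h
        ext1 v
        apply Subtype.ext
        change σ (g * h) *ᵥ (v : Fin N → E) = σ g *ᵥ (σ h *ᵥ (v : Fin N → E))
        rw [map_mul, Matrix.mulVec_mulVec] }
  have hτv : ∀ g (v : V), ((τ g v : V) : Fin N → E) = σ g *ᵥ (v : Fin N → E) := fun g v => rfl
  have hτ : Function.Injective τ := by
    intro g h hgh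
    apply hρ
    have h1 : ∀ v ∈ Λ0, ρ g *ᵥ v = ρ h *ᵥ v := by
      intro v hv
      have h2 := congrArg (fun f : Module.End O V => ((f ⟨_, Submodule.subset_span ⟨v, hv, rfl⟩⟩ : V) : Fin N → E)) hgh
      simp only [hτv] at h2
      rw [hσj, hσj] at h2
      ext i
      have := congrFun h2 i
      rw [hj, hj] at this
      exact (algebraMap K0 E).injective this
    have h3 : Matrix.mulVecLin (ρ g) = Matrix.mulVecLin (ρ h) :=
      LinearMap.ext_on hspan (fun v hv => h1 v hv)
    exact Matrix.toLin'.injective h3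
  let b := Module.finBasis O V
  let e := LinearMap.toMatrixAlgEquiv b
  exact ⟨_, (e.toMulEquiv.toMonoidHom).comp τ, fun g h hgh => hτ (e.injective hgh)⟩

theorem partC {p : ℕ} [hp : Fact p.Prime] {G : Type*} [Group G] {d N : ℕ} (ρ : G →* Matrix (Fin N) (Fin N) (FractionRing (MvPolynomial (Fin d) (ZMod p))))
    (hρ : Function.Injective ρ)
    (Λ0 : Submodule (MvPolynomial (Fin d) (ZMod p)) (Fin N → FractionRing (MvPolynomial (Fin d) (ZMod p)))) (hfg : Λ0.FG) (hst : ∀ g, ∀ v ∈ Λ0, ρ g *ᵥ v ∈ Λ0)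
    (hspan : Submodule.span (FractionRing (MvPolynomial (Fin d) (ZMod p))) (Λ0 : Set (Fin N → FractionRing (MvPolynomial (Fin d) (ZMod p)))) = ⊤) :
    ∃ (N' : ℕ) (ρ' : G →* Matrix (Fin N') (Fin N') (PowerSeries (ZMod p))), Function.Injective ρ' := by
  obtain ⟨φ, hφ⟩ := exists_pows_indep p d
  letI : Algebra (MvPolynomial (Fin d) (ZMod p)) (PowerSeries (ZMod p)) := φ.toAlgebra
  haveI : FaithfulSMul (MvPolynomial (Fin d) (ZMod p)) (FractionRing (PowerSeries (ZMod p))) := by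
    rw [faithfulSMul_iff_algebraMap_injective]
    rw [IsScalarTower.algebraMap_eq (MvPolynomial (Fin d) (ZMod p)) (PowerSeries (ZMod p)) (FractionRing (PowerSeries (ZMod p)))]
    exact (IsFractionRing.injective (PowerSeries (ZMod p)) _).comp hφ
  letI := FractionRing.liftAlgebra (MvPolynomial (Fin d) (ZMod p)) (FractionRing (PowerSeries (ZMod p)))
  haveI := FractionRing.isScalarTower_liftAlgebra (MvPolynomial (Fin d) (ZMod p)) (FractionRing (PowerSeries (ZMod p)))
  exact partC1 (E := FractionRing (PowerSeries (ZMod p))) ρ hρ Λ0 hfg hst hspan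

lemma no_p_torsion {K : Type*} [Field K] {p : ℕ} [hp : Fact p.Prime] [CharP K p] {n : ℕ} (g : GL (Fin n) K)
    (hg : IsSemisimpleElt g) (h : g ^ p = 1) : g = 1 := by
  rcases isEmpty_or_nonempty (Fin n) with he | he
  · exact Units.ext (Subsingleton.elim _ _)
  let M : Matrix (Fin n) (Fin n) K := g
  have hM : M ^ p = 1 := by
    have := congrArg Units.val h
    simpa using this
  have h1 : (M - 1) ^ p = 0 := by
    rw [sub_pow_char_of_commute p (Commute.one_right M), hM, one_pow, sub_self]
  let f : Module.End K (Fin n → K) := M.mulVecLin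
  have hf : f.IsSemisimple := hg
  have h2 : (Polynomial.aeval f (Polynomial.X - Polynomial.C (1 : K))).IsSemisimple := hf.aeval _
  have h3 : Polynomial.aeval f (Polynomial.X - Polynomial.C (1 : K)) = Matrix.toLinAlgEquiv' (M - 1) := by
    simp only [map_sub, Polynomial.aeval_X, map_one]
    rfl
  rw [h3] at h2
  have h4 : IsNilpotent (Matrix.toLinAlgEquiv' (M - 1)) := ⟨p, by rw [← map_pow, h1, map_zero]⟩
  have h5 := Module.End.eq_zero_of_isNilpotent_isSemisimple h4 h2
  have h6 : M - 1 = 0 := Matrix.toLinAlgEquiv'.injective (h5.trans (map_zero _).symm)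
  exact Units.ext (sub_eq_zero.1 h6)

lemma congSub_tf {p N : ℕ} [hp : Fact p.Prime] {G : Type*} [Group G] (htor : ∀ a : G, a ^ p = 1 → a = 1)
    (ρ : G →* Matrix (Fin N) (Fin N) (PowerSeries (ZMod p))) (hρ : Function.Injective ρ) (z : G) (hz : z ∈ congSub ρ 1) (n : ℕ) (hn : 0 < n)
    (h : z ^ n = 1) : z = 1 := by
  rcases isEmpty_or_nonempty (Fin N) with he | he
  · exact hρ (Subsingleton.elim _ _)
  have htor' : ∀ (n : ℕ) (a : G), a ^ (p ^ n) = 1 → a = 1 := by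
    intro n
    induction n with
    | zero => intro a h; simpa using h
    | succ n ih => intro a h; rw [pow_succ, pow_mul] at h; exact ih a (htor _ h)
  obtain ⟨j, m, hm, rfl⟩ := Nat.exists_eq_pow_mul_and_not_dvd hn.ne' p hp.out.ne_one
  have hcop : Nat.Coprime p m := (Nat.Prime.coprime_iff_not_dvd hp.out).2 hm
  rw [pow_mul] at h
  set y := z ^ p ^ j with hy
  have hy1 : y ∈ congSub ρ 1 := Subgroup.pow_mem _ hz _
  refine htor' j z ?_
  rw [← hy]
  have hm0 : 0 < m := Nat.pos_of_ne_zero (by rintro rfl; simp at hn)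
  have hper : ∀ t, y ^ (p ^ (m.totient * t)) = y := by
    intro t
    have h1 : p ^ (m.totient * t) ≡ 1 [MOD m] := by
      rw [pow_mul]
      have := (Nat.ModEq.pow_totient hcop).pow t
      simpa using this
    have h2 : orderOf y ∣ m := orderOf_dvd_of_pow_eq_one h
    have h3 := pow_eq_pow_iff_modEq.2 (h1.of_dvd h2)
    simpa using h3
  have hDv : ∀ t, Dv t (ρ y - 1) := by
    intro t
    have h1 := rho_pow ρ y (m.totient * t)
    rw [hper t] at h1
    rw [mem_congSub] at hy1
    have h2 := Dv.pow hy1 (p ^ (m.totient * t))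
    have h3 : ρ y - 1 = (ρ y - 1) ^ p ^ (m.totient * t) := by
      nth_rewrite 1 [h1]; rw [add_sub_cancel_left]
    rw [← h3, one_mul] at h2
    refine h2.mono ?_
    calc t ≤ m.totient * t := Nat.le_mul_of_pos_left t (Nat.totient_pos.2 hm0)
      _ ≤ _ := (Nat.lt_pow_self hp.out.one_lt).le
  apply hρ
  rw [map_one, ← sub_eq_zero]
  ext i j l
  have h1 := hDv (l + 1) i j
  rw [PowerSeries.X_pow_dvd_iff] at h1
  have := h1 l (by omega)
  simpa using this

theorem stmt_15 {K : Type*} [Field K] (hchar : ringChar K ≠ 0) {n : ℕ} (hn : 1 ≤ n)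
    (Γ : Subgroup (GL (Fin n) K)) (hfg : Group.FG ↥Γ)
    (hani : ∀ g ∈ Γ, IsSemisimpleElt g)
    (k : ℕ) (A : Fin k → Subgroup (GL (Fin n) K))
    (hle : ∀ i, A i ≤ Γ)
    (hab : ∀ i, ∀ x ∈ A i, ∀ y ∈ A i, x * y = y * x)
    (hprod : ∀ x ∈ Γ, ∃ a : Fin k → GL (Fin n) K,
      (∀ i, a i ∈ A i) ∧ x = (List.ofFn a).prod) :
    IsVirtuallyAbelian ↥Γ := by
  obtain ⟨p, hpp⟩ : ∃ p, p = ringChar K := ⟨_, rfl⟩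
  haveI : CharP K p := by rw [hpp]; infer_instance
  haveI hp : Fact p.Prime := ⟨(CharP.char_is_prime_or_zero K p).resolve_right (by rw [hpp]; exact hchar)⟩
  have htor : ∀ a : Γ, a ^ p = 1 → a = 1 := by
    intro a ha
    exact Subtype.ext (no_p_torsion (p := p) a.1 (hani a a.2) (congrArg Subtype.val ha))
  obtain ⟨d, N0, ρ0, hρ0, Λ0, h1, h2, h3⟩ := partA (p := p) Γ hfg
  obtain ⟨N, ρ, hρ⟩ := partC ρ0 hρ0 Λ0 h1 h2 h3
  let A' : Fin k → Subgroup Γ := fun i => (A i).subgroupOf Γ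
  have hA' : ∀ i, ∀ x ∈ A' i, ∀ y ∈ A' i, x * y = y * x := by
    intro i x hx y hy
    exact Subtype.ext (hab i x hx y hy)
  have hprod' : ∀ x : Γ, ∃ a : Fin k → Γ, (∀ i, a i ∈ A' i) ∧ x = (List.ofFn a).prod := by
    intro x
    obtain ⟨a, ha, hx⟩ := hprod x x.2
    refine ⟨fun i => ⟨a i, hle i (ha i)⟩, ha, ?_⟩
    apply Subtype.ext
    rw [hx]
    change _ = Γ.subtype _
    rw [map_list_prod, List.map_ofFn]
    rfl
  obtain ⟨C, B, hUB⟩ := partD ρ A' hA' (fun i => partB htor ρ0 hρ0 Λ0 h1 h2 h3 (A' i) (hA' i)) hprod'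
  have hF := partF ρ C B hUB
  haveI : CharP (PowerSeries (ZMod p)) p := charP_of_injective_algebraMap (R := ZMod p) (A := PowerSeries (ZMod p)) PowerSeries.C_injective p
  haveI : CharP (FractionRing (PowerSeries (ZMod p))) p := 
    charP_of_injective_algebraMap (IsFractionRing.injective (PowerSeries (ZMod p)) _) p
  haveI : CharP (AlgebraicClosure (FractionRing (PowerSeries (ZMod p)))) p :=
    charP_of_injective_algebraMap (algebraMap (FractionRing (PowerSeries (ZMod p))) _).injective p
  let ι : PowerSeries (ZMod p) →+* AlgebraicClosure (FractionRing (PowerSeries (ZMod p))) :=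
    (algebraMap (FractionRing (PowerSeries (ZMod p))) _).comp (algebraMap _ _)
  have hι : Function.Injective ι := (algebraMap (FractionRing (PowerSeries (ZMod p))) _).injective.comp (IsFractionRing.injective (PowerSeries (ZMod p)) _)
  let r : congSub ρ 1 →* Matrix (Fin N) (Fin N) (AlgebraicClosure (FractionRing (PowerSeries (ZMod p)))) :=
    ((ι.mapMatrix (m := Fin N)).toMonoidHom.comp ρ).comp (congSub ρ 1).subtype
  have hr : Function.Injective r := by
    intro a b hab
    exact Subtype.ext (hρ (Matrix.map_injective hι hab))
  obtain ⟨H, hH, hHc⟩ := partG (p := p) r hr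
    (fun g m hm h => Subtype.ext (congSub_tf htor ρ hρ g g.2 m hm (congrArg Subtype.val h)))
    (p ^ N) (pow_pos hp.out.pos N) (fun g h => Subtype.ext (hρ (by
      have := hF g h g.2 h.2
      rw [← map_mul, ← map_mul] at this
      exact this)))
  refine ⟨H.map (congSub ρ 1).subtype, ⟨?_⟩, ?_⟩
  · rw [Subgroup.index_map_subtype]
    exact mul_ne_zero hH.index_ne_zero (congSub_finite ρ 1)
  · rintro ⟨_, x, hx, rfl⟩ ⟨_, y, hy, rfl⟩
    apply Subtype.ext
    have := congrArg Subtype.val (hHc ⟨x, hx⟩ ⟨y, hy⟩)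
    exact congrArg (congSub ρ 1).subtype (hHc ⟨x, hx⟩ ⟨y, hy⟩ |> congrArg Subtype.val)
end

section
/- Let K be a field of characteristic zero, n ≥ 1, and let Γ be a subgroup of GL_n(K) all of whose elements are semi-simple (an anisotropic linear group). If Γ is virtually solvable, then Γ is virtually abelian. -/
open Matrix

/-- A group is virtually solvable if it has a solvable subgroup of finite index. -/
def IsVirtuallySolvable (G : Type*) [Group G] : Prop :=
  ∃ H : Subgroup G, H.FiniteIndex ∧ IsSolvable ↥H

open Polynomial TensorProduct in
theorem aux_roots_finite {K R : Type*} [Field K] [CommRing R] [Algebra K R] [IsArtinianRing R]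
    [IsReduced R] (p : K[X]) (hp : p ≠ 0) : {x : R | aeval x p = 0}.Finite := by
  classical
  have h1 : ∀ I : MaximalSpectrum R, {y : R ⧸ I.asIdeal | aeval y p = 0}.Finite := by
    intro I
    let _ : Field (R ⧸ I.asIdeal) := Ideal.Quotient.field I.asIdeal
    have := (p.rootSet_finite (R ⧸ I.asIdeal))
    refine this.subset ?_
    intro y hy
    exact (Polynomial.mem_rootSet_of_ne hp).2 hy
  have h2 : (Set.univ.pi fun I : MaximalSpectrum R => {y : R ⧸ I.asIdeal | aeval y p = 0}).Finite :=
    Set.Finite.pi' (fun I => h1 I) |>.subset (by intro f hf I; exact hf I (Set.mem_univ _))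
  refine Set.Finite.of_finite_image (f := IsArtinianRing.equivPi R) (h2.subset ?_)
    ((IsArtinianRing.equivPi R).injective.injOn)
  rintro _ ⟨x, hx, rfl⟩ I -
  have : (IsArtinianRing.equivPi R x) I = Ideal.Quotient.mkₐ K I.asIdeal x := rfl
  show aeval _ p = 0
  rw [this, aeval_algHom_apply, show aeval x p = 0 from hx, map_zero]

open Polynomial in
theorem aux_comm_roots {K V : Type*} [Field K] [CharZero K] [AddCommGroup V] [Module K V]
    [FiniteDimensional K V] (S : Set (Module.End K V))
    (hc : ∀ a ∈ S, ∀ b ∈ S, a * b = b * a) (hs : ∀ a ∈ S, a.IsSemisimple)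
    (p : K[X]) (hp : p ≠ 0) : {x | x ∈ S ∧ aeval x p = 0}.Finite := by
  let _ : CommRing (Algebra.adjoin K S) := 
    { (inferInstance : Ring (Algebra.adjoin K S)) with
      mul_comm := fun a b => by
        have := Algebra.isMulCommutative_adjoin K hc
        exact mul_comm' a b }
  have hcc : ∀ x ∈ Algebra.adjoin K S, ∀ y ∈ Algebra.adjoin K S, Commute x y := by
    intro x hx y hy
    exact congrArg Subtype.val (mul_comm (⟨x, hx⟩ : Algebra.adjoin K S) ⟨y, hy⟩)
  have hss : ∀ x ∈ Algebra.adjoin K S, Module.End.IsSemisimple x := by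
    intro x hx
    induction hx using Algebra.adjoin_induction with
    | mem x hx => exact hs x hx
    | algebraMap r => 
      have := (Module.End.isSemisimple_id (R := K) (M := V)).aeval (C r)
      simpa using this
    | add x y hx hy h1 h2 => exact Module.End.IsSemisimple.add_of_commute (hcc x hx y hy) h1 h2
    | mul x y hx hy h1 h2 => exact Module.End.IsSemisimple.mul_of_commute (hcc x hx y hy) h1 h2
  have : IsReduced (Algebra.adjoin K S) := by
    constructor
    rintro ⟨x, hx⟩ hn
    have : IsNilpotent x := hn.map (Algebra.adjoin K S).val
    exact Subtype.ext (Module.End.eq_zero_of_isNilpotent_isSemisimple this (hss x hx))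
  have : FiniteDimensional K (Algebra.adjoin K S) := inferInstance
  have : IsArtinianRing (Algebra.adjoin K S) := IsArtinianRing.of_finite K _
  refine ((aux_roots_finite (R := Algebra.adjoin K S) p hp).image Subtype.val).subset ?_
  rintro x ⟨hx, hx0⟩
  refine ⟨⟨x, Algebra.subset_adjoin hx⟩, ?_, rfl⟩
  apply Subtype.ext
  have := aeval_algHom_apply (Algebra.adjoin K S).val ⟨x, Algebra.subset_adjoin hx⟩ p
  exact this.symm.trans hx0

theorem aux_centralizer {K V G : Type*} [Field K] [AddCommGroup V] [Module K V]
    [FiniteDimensional K V] [Group G] (ρ : G →* Module.End K V) (hρ : Function.Injective ρ)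
    (D : Subgroup G) (S : Set G) (hS : ∀ s ∈ S, {x | ∃ g ∈ D, g * s * g⁻¹ = x}.Finite) :
    (Subgroup.centralizer S).relIndex D ≠ 0 := by
  obtain ⟨T, hT, hTs⟩ := (Submodule.fg_span_iff_fg_span_finset_subset (R := K) (ρ '' S)).1
    (IsNoetherian.noetherian _)
  have key : ∀ t : T, ∃ s ∈ S, ρ s = t := fun t => hT t.2
  choose f hfS hf using key
  have h1 : ∀ t : T, (Subgroup.centralizer {f t}).relIndex D ≠ 0 := by
    intro t
    have hfin := hS _ (hfS t)
    have : Finite {x | ∃ g ∈ D, g * f t * g⁻¹ = x} := hfin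
    have : Finite (D ⧸ (Subgroup.centralizer {f t}).subgroupOf D) := by
      refine Finite.of_injective (β := {x | ∃ g ∈ D, g * f t * g⁻¹ = x})
        (Quotient.lift (fun g : D => ⟨(g:G) * f t * (g:G)⁻¹, g, g.2, rfl⟩) ?_) ?_
      · intro a b hab
        have hab := QuotientGroup.leftRel_apply.1 hab
        rw [Subgroup.mem_subgroupOf, Subgroup.mem_centralizer_singleton_iff] at hab
        apply Subtype.ext
        simp only [Subgroup.coe_mul, Subgroup.coe_inv] at hab ⊢
        have := congrArg (fun u => (a:G) * u * (b:G)⁻¹) hab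
        simp only [mul_assoc] at this ⊢
        simpa using this.symm
      · intro a b
        induction a using Quotient.inductionOn with | _ a
        induction b using Quotient.inductionOn with | _ b
        intro hab
        apply Quotient.sound
        refine QuotientGroup.leftRel_apply.2 ?_
        rw [Subgroup.mem_subgroupOf, Subgroup.mem_centralizer_singleton_iff]
        have hab := congrArg Subtype.val hab
        simp only [Quotient.lift_mk, Subgroup.coe_mul, Subgroup.coe_inv] at hab ⊢
        have := congrArg (fun u => (a:G)⁻¹ * u * (b:G)) hab
        simp only [mul_assoc] at this ⊢
        simpa using this.symm
    exact Subgroup.index_ne_zero_of_finite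
  have h2 := Subgroup.relIndex_iInf_ne_zero h1
  intro h0
  refine h2 (Subgroup.relIndex_eq_zero_of_le_left ?_ h0)
  intro g hg
  rw [Subgroup.mem_centralizer_iff]
  intro s hs
  apply hρ
  have : ρ s ∈ Submodule.span K (T : Set (Module.End K V)) := by
    rw [← hTs]; exact Submodule.subset_span ⟨s, hs, rfl⟩
  rw [map_mul, map_mul]
  generalize ρ s = x at this
  induction this using Submodule.span_induction with
  | mem x hx =>
    have := (Subgroup.mem_iInf.1 hg) ⟨x, hx⟩
    rw [Subgroup.mem_centralizer_singleton_iff] at this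
    have := congrArg ρ this
    rw [map_mul, map_mul, hf] at this
    exact this.symm
  | zero => simp
  | add x y _ _ h1 h2 => rw [add_mul, mul_add, h1, h2]
  | smul c x _ h => rw [smul_mul_assoc, mul_smul_comm, h]

open Polynomial TensorProduct in
theorem aux_exponent {K V G : Type*} [Field K] [CharZero K] [AddCommGroup V] [Module K V]
    [FiniteDimensional K V] [Group G] (ρ : G →* Module.End K V) (hρ : Function.Injective ρ)
    (z : G) (hz : z ∈ commutator G) (hc : ∀ g, g * z = z * g) (hs : (ρ z).IsSemisimple) :
    aeval (ρ z) (X ^ (Module.finrank K V).factorial - 1 : K[X]) = 0 := by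
  set m := (Module.finrank K V).factorial with hm
  let L := AlgebraicClosure K
  let β : G →* Module.End L (L ⊗[K] V) := 
    { toFun := fun g => (ρ g).baseChange L
      map_one' := by simp [Module.End.one_eq_id]
      map_mul' := fun a b => by simp [Module.End.mul_eq_comp, LinearMap.baseChange_comp] }
  have hev : ∀ μ : L, (β z).HasEigenvalue μ → μ ^ m = 1 := by
    intro μ hμ
    let W := (β z).eigenspace μ
    have hmap : ∀ g, ∀ w ∈ W, β g w ∈ W := by
      intro g w hw
      rw [Module.End.mem_eigenspace_iff] at hw ⊢
      rw [← Module.End.mul_apply, ← map_mul, ← hc, map_mul, Module.End.mul_apply, hw, map_smul]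
    let φ : G →* Module.End L W := 
      { toFun := fun g => (β g).restrict (hmap g)
        map_one' := by ext w; simp
        map_mul' := fun a b => by ext w; simp }
    let δ : G →* L := MonoidHom.comp (LinearMap.det (M := W)) φ
    have h1 : δ z = 1 := by
      have := Abelianization.commutator_subset_ker δ.toHomUnits hz
      rw [MonoidHom.mem_ker] at this
      exact congrArg Units.val this
    have h2 : φ z = μ • LinearMap.id := by
      ext w
      exact Module.End.mem_eigenspace_iff.1 w.2
    have h3 : δ z = μ ^ Module.finrank L W := by
      have : Module.Free L W := Module.Free.of_divisionRing L W
      show LinearMap.det (M := W) (φ z) = _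
      rw [h2, LinearMap.det_smul, LinearMap.det_id, mul_one]
    have h4 : Module.finrank L W ∣ m := by
      apply Nat.dvd_factorial
      · have : W ≠ ⊥ := hμ
        exact Submodule.one_le_finrank_iff.2 this
      · rw [← Module.finrank_baseChange (R := L) (S := K) (M' := V)]
        exact Submodule.finrank_le W
    obtain ⟨k, hk⟩ := h4
    rw [hk, pow_mul, ← h3, h1, one_pow]
  have hsep : (minpoly K (ρ z)).Separable := 
    PerfectField.separable_iff_squarefree.2 hs.minpoly_squarefree
  have hdvd : minpoly K (ρ z) ∣ X ^ m - 1 := by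
    have hsep' : ((minpoly K (ρ z)).map (algebraMap K L)).Separable := hsep.map
    rw [← Polynomial.map_dvd_map' (algebraMap K L)]
    have hm0 : 0 < m := Nat.factorial_pos _
    have hne : Polynomial.map (algebraMap K L) (X ^ m - 1) ≠ 0 := by
      rw [Polynomial.map_ne_zero_iff (algebraMap K L).injective]
      exact (monic_X_pow_sub_C (1:K) hm0.ne').ne_zero
    rw [(IsAlgClosed.splits _).dvd_iff_roots_le_roots hsep'.ne_zero hne]
    · rw [Multiset.le_iff_subset (nodup_roots hsep')]
      intro μ hμ
      have hr := isRoot_of_mem_roots hμ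
      rw [mem_roots]
      · have : (β z).HasEigenvalue μ := by
          rw [Module.End.hasEigenvalue_iff_isRoot_charpoly]
          show ((ρ z).baseChange L).charpoly.IsRoot μ
          rw [LinearMap.charpoly_baseChange]
          exact hr.dvd (Polynomial.map_dvd _ (LinearMap.minpoly_dvd_charpoly _))
        simp [IsRoot, hev μ this]
      · exact hne
  exact aeval_eq_zero_of_dvd_aeval_eq_zero hdvd (minpoly.aeval _ _)

def AuxVA {G : Type*} [Group G] (D : Subgroup G) : Prop :=
  ∃ H ≤ D, H.relIndex D ≠ 0 ∧ ∀ x ∈ H, ∀ y ∈ H, x * y = y * x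

theorem aux_normal {K V G : Type*} [Field K] [AddCommGroup V] [Module K V]
    [FiniteDimensional K V] [Group G] (ρ : G →* Module.End K V) (hρ : Function.Injective ρ)
    (D : Subgroup G) (hD : AuxVA D) :
    ∃ N ≤ D, N.relIndex D ≠ 0 ∧ (∀ x ∈ N, ∀ y ∈ N, x * y = y * x) ∧
      ∀ g : G, D.map (MulAut.conj g).toMonoidHom = D → ∀ x ∈ N, g * x * g⁻¹ ∈ N := by
  let sp : Subgroup G → Submodule K (Module.End K V) := fun H => Submodule.span K (ρ '' H)
  have hmono : ∀ {H H' : Subgroup G}, H ≤ H' → sp H ≤ sp H' := fun h =>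
    Submodule.span_mono (Set.image_mono h)
  obtain ⟨H, ⟨hHD, hHi⟩, hmin⟩ := WellFounded.has_min
    (InvImage.wf (fun H => Module.finrank K (sp H)) Nat.lt_wfRel.wf)
    {H : Subgroup G | H ≤ D ∧ H.relIndex D ≠ 0} ⟨D, le_rfl, by simp⟩
  have hle : ∀ H' ≤ D, H'.relIndex D ≠ 0 → sp H ≤ sp H' := by
    intro H' h1 h2
    have h3 := hmin (H ⊓ H') ⟨inf_le_left.trans hHD, Subgroup.relIndex_inf_ne_zero hHi h2⟩
    have h4 : sp (H ⊓ H') = sp H :=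
      Submodule.eq_of_le_of_finrank_le (hmono inf_le_left) (not_lt.1 h3)
    rw [← h4]
    exact hmono inf_le_right
  obtain ⟨B, hBD, hBi, hBc⟩ := hD
  have hcomm : ∀ x ∈ sp H, ∀ y ∈ sp H, x * y = y * x := by
    intro x hx y hy
    replace hx : x ∈ Submodule.span K (ρ '' B) := hle B hBD hBi hx
    replace hy : y ∈ Submodule.span K (ρ '' B) := hle B hBD hBi hy
    induction hx, hy using Submodule.span_induction₂ with
    | mem_mem x y hx hy =>
      obtain ⟨a, ha, rfl⟩ := hx
      obtain ⟨b, hb, rfl⟩ := hy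
      rw [← map_mul, hBc a ha b hb, map_mul]
    | zero_left => simp
    | zero_right => simp
    | add_left _ _ _ _ _ _ h1 h2 => rw [add_mul, mul_add, h1, h2]
    | add_right _ _ _ _ _ _ h1 h2 => rw [add_mul, mul_add, h1, h2]
    | smul_left c _ _ _ _ h => rw [smul_mul_assoc, mul_smul_comm, h]
    | smul_right c _ _ _ _ h => rw [smul_mul_assoc, mul_smul_comm, h]
  let T : Set G := {x | x ∈ D ∧ ρ x ∈ sp H}
  have hHT : H ≤ Subgroup.closure T := fun x hx =>
    Subgroup.subset_closure ⟨hHD hx, Submodule.subset_span ⟨x, hx, rfl⟩⟩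
  refine ⟨Subgroup.closure T, (Subgroup.closure_le _).2 fun x hx => hx.1, ?_, ?_, ?_⟩
  · exact fun h0 => hHi (Subgroup.relIndex_eq_zero_of_le_left hHT h0)
  · have := Subgroup.isMulCommutative_closure (k := T) (fun x hx y hy => hρ (by
      rw [map_mul, map_mul, hcomm _ hx.2 _ hy.2]))
    intro x hx y hy
    exact congrArg Subtype.val (mul_comm' (⟨x, hx⟩ : Subgroup.closure T) ⟨y, hy⟩)
  · intro g hg
    have hT : ∀ x ∈ T, g * x * g⁻¹ ∈ T := by
      rintro x ⟨hxD, hx⟩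
      have hgx : ∀ x ∈ D, g * x * g⁻¹ ∈ D := by
        intro x hx
        rw [← hg]
        exact ⟨x, hx, rfl⟩
      refine ⟨hgx x hxD, ?_⟩
      let c := (MulAut.conj g⁻¹).toMonoidHom
      have hcD : D.map c = D := by
        conv_lhs => rw [← hg]
        rw [Subgroup.map_map]
        convert Subgroup.map_id D
        ext y
        simp [c, mul_assoc]
      have hs := hle (H.map c) (by rw [← hcD]; exact Subgroup.map_mono hHD) (by
        conv_lhs => rw [← hcD]
        rw [Subgroup.relIndex_map_map_of_injective]
        · exact hHi
        · exact (MulAut.conj g⁻¹).injective) hx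
      rw [map_mul, map_mul]
      generalize ρ x = X at hs
      induction hs using Submodule.span_induction with
      | mem X hX =>
        obtain ⟨_, ⟨y, hy, rfl⟩, rfl⟩ := hX
        rw [← map_mul, ← map_mul]
        refine Submodule.subset_span ⟨y, hy, ?_⟩
        congr 1
        simp [c, mul_assoc]
      | zero => simp
      | add x y _ _ h1 h2 => rw [mul_add, add_mul]; exact add_mem h1 h2
      | smul r x _ h => rw [mul_smul_comm, smul_mul_assoc]; exact Submodule.smul_mem _ _ h
    intro x hx
    have : Subgroup.closure T ≤ (Subgroup.closure T).comap (MulAut.conj g).toMonoidHom :=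
      (Subgroup.closure_le _).2 fun x hx => Subgroup.subset_closure (hT x hx)
    exact this hx

open Polynomial in
theorem aux_step {K V G : Type*} [Field K] [CharZero K] [AddCommGroup V] [Module K V]
    [FiniteDimensional K V] [Group G] (ρ : G →* Module.End K V) (hρ : Function.Injective ρ)
    (hs : ∀ g, (ρ g).IsSemisimple)
    (D : Subgroup G) (hD : AuxVA ⁅D, D⁆) : AuxVA D := by
  obtain ⟨N, hND, hNi, hNc, hNn⟩ := aux_normal ρ hρ _ hD
  have hNn' : ∀ g ∈ D, ∀ x ∈ N, g * x * g⁻¹ ∈ N := by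
    intro g hg
    apply hNn
    have : D.map (MulAut.conj g).toMonoidHom = D := by
      apply le_antisymm
      · rintro _ ⟨x, hx, rfl⟩
        exact D.mul_mem (D.mul_mem hg hx) (D.inv_mem hg)
      · intro x hx
        exact ⟨g⁻¹ * x * g, D.mul_mem (D.mul_mem (D.inv_mem hg) hx) hg, by simp [mul_assoc]⟩
    rw [Subgroup.map_commutator, this]
  have hfinN : ∀ p : K[X], p ≠ 0 → {x : G | x ∈ N ∧ aeval (ρ x) p = 0}.Finite := by
    intro p hp
    refine Set.Finite.of_finite_image (f := ρ) ?_ hρ.injOn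
    refine (aux_comm_roots (ρ '' N) ?_ ?_ p hp).subset ?_
    · rintro _ ⟨a, ha, rfl⟩ _ ⟨b, hb, rfl⟩
      rw [← map_mul, hNc a ha b hb, map_mul]
    · rintro _ ⟨a, ha, rfl⟩
      exact hs a
    · rintro _ ⟨a, ha, rfl⟩
      exact ⟨⟨a, ha.1, rfl⟩, ha.2⟩
  have hC : (Subgroup.centralizer (N : Set G)).relIndex D ≠ 0 := by
    apply aux_centralizer ρ hρ
    intro s hsN
    refine (hfinN (minpoly K (ρ s)) (minpoly.ne_zero (Algebra.IsIntegral.isIntegral _))).subset ?_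
    rintro _ ⟨g, hg, rfl⟩
    refine ⟨hNn' g hg s hsN, ?_⟩
    have hconj : ∀ p : K[X], aeval (ρ (g * s * g⁻¹)) p = ρ g * aeval (ρ s) p * ρ g⁻¹ := by
      intro p
      have hgg : ρ g * ρ g⁻¹ = 1 := by rw [← map_mul]; simp
      induction p using Polynomial.induction_on' with
      | add p q hp hq => rw [map_add, map_add, hp, hq, mul_add, add_mul]
      | monomial k a =>
        rw [aeval_monomial, aeval_monomial, ← map_pow, ← map_pow, conj_pow, map_mul, map_mul,
          ← Algebra.smul_def, ← Algebra.smul_def, mul_smul_comm, smul_mul_assoc]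
    rw [hconj, minpoly.aeval]
    simp
  let G1 := Subgroup.centralizer (N : Set G) ⊓ D
  have hG1D : G1 ≤ D := inf_le_right
  have hG1i : G1.relIndex D ≠ 0 := by
    rw [Subgroup.inf_relIndex_right]; exact hC
  have hG1' : ⁅G1, G1⁆ ≤ ⁅D, D⁆ := Subgroup.commutator_mono hG1D hG1D
  have hN1 : N.relIndex ⁅G1, G1⁆ ≠ 0 := fun h0 => hNi (Subgroup.relIndex_eq_zero_of_le_right hG1' h0)
  have hNfin : ((N ⊓ ⁅G1, G1⁆ : Subgroup G) : Set G).Finite := by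
    refine (hfinN (X ^ (Module.finrank K V).factorial - 1)
      (monic_X_pow_sub_C (1:K) (Nat.factorial_pos _).ne').ne_zero).subset ?_
    rintro z ⟨hzN, hz⟩
    refine ⟨hzN, ?_⟩
    rw [SetLike.mem_coe, ← Subgroup.map_subtype_commutator] at hz
    obtain ⟨w, hw, rfl⟩ := hz
    refine aux_exponent (ρ.comp G1.subtype) (hρ.comp Subtype.val_injective) w hw ?_ (hs _)
    intro g
    apply Subtype.ext
    exact (Subgroup.mem_centralizer_iff.1 g.2.1 w hzN).symm
  have hfin : ((⁅G1, G1⁆ : Subgroup G) : Set G).Finite := by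
    have h1 : (⊥ : Subgroup G).relIndex (N ⊓ ⁅G1, G1⁆) ≠ 0 := by
      rw [Subgroup.relIndex_bot_left]
      have : Finite (N ⊓ ⁅G1, G1⁆ : Subgroup G) := hNfin
      exact Nat.card_pos.ne'
    have h2 : (N ⊓ ⁅G1, G1⁆).relIndex ⁅G1, G1⁆ ≠ 0 := by
      rw [Subgroup.inf_relIndex_right]; exact hN1
    have h3 := Subgroup.relIndex_ne_zero_trans h1 h2
    rw [Subgroup.relIndex_bot_left] at h3
    exact Nat.finite_of_card_ne_zero h3
  have hZ : (Subgroup.centralizer (G1 : Set G)).relIndex G1 ≠ 0 := by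
    apply aux_centralizer ρ hρ
    intro s hs1
    refine (hfin.image (fun x => x * s)).subset ?_
    rintro _ ⟨g, hg, rfl⟩
    exact ⟨_, Subgroup.commutator_mem_commutator hg hs1, by simp [commutatorElement_def]⟩
  refine ⟨Subgroup.centralizer (G1 : Set G) ⊓ G1, inf_le_right.trans hG1D, ?_, ?_⟩
  · refine Subgroup.relIndex_ne_zero_trans (K := G1) ?_ hG1i
    rw [Subgroup.inf_relIndex_right]; exact hZ
  · intro x hx y hy
    exact (Subgroup.mem_centralizer_iff.1 hx.1 y hy.2).symm

theorem aux_main {K V G : Type*} [Field K] [CharZero K] [AddCommGroup V] [Module K V]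
    [FiniteDimensional K V] [Group G] (ρ : G →* Module.End K V) (hρ : Function.Injective ρ)
    (hs : ∀ g, (ρ g).IsSemisimple) (k : ℕ) :
    ∀ j, AuxVA (derivedSeries G (j + k)) → AuxVA (derivedSeries G j) := by
  induction k with
  | zero => intro j h; exact h
  | succ k ih =>
    intro j h
    apply ih
    apply aux_step ρ hρ hs
    rw [← derivedSeries_succ]
    exact h

/-- A virtually solvable anisotropic linear group over a field of characteristic zero is
virtually abelian. -/
theorem stmt_16 {K : Type*} [Field K] [CharZero K] {n : ℕ} (hn : 1 ≤ n)
    (Γ : Subgroup (GL (Fin n) K)) (hani : ∀ g ∈ Γ, IsSemisimpleElt g)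
    (hsolv : IsVirtuallySolvable ↥Γ) :
    IsVirtuallyAbelian ↥Γ := by
  obtain ⟨H, hH, ⟨⟨k, hk⟩⟩⟩ := hsolv
  let ρ : H →* Module.End K (Fin n → K) :=
    { toFun := fun g => (((g : Γ) : GL (Fin n) K) : Matrix (Fin n) (Fin n) K).mulVecLin
      map_one' := by simp [Module.End.one_eq_id]
      map_mul' := fun a b => by simp [Module.End.mul_eq_comp, Matrix.mulVecLin_mul] }
  have hρ : Function.Injective ρ := by
    intro a b hab
    apply Subtype.ext
    apply Subtype.ext
    apply Units.ext
    exact Matrix.toLin'.injective hab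
  have h := aux_main ρ hρ (fun g => hani _ g.1.2) k 0
    (by rw [zero_add, hk]; exact ⟨⊥, le_rfl, by simp, by simp⟩)
  rw [derivedSeries_zero] at h
  obtain ⟨A, -, hA, hAc⟩ := h
  refine ⟨A.map H.subtype, ⟨?_⟩, ?_⟩
  · have h1 : (A.map H.subtype).relIndex H ≠ 0 := by
      have h2 := Subgroup.relIndex_map_map_of_injective A ⊤ H.subtype_injective
      rw [← MonoidHom.range_eq_map, Subgroup.range_subtype] at h2
      rw [h2]; exact hA
    rw [← Subgroup.relIndex_top_right]
    refine Subgroup.relIndex_ne_zero_trans h1 ?_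
    rw [Subgroup.relIndex_top_right]
    exact hH.index_ne_zero
  · rintro ⟨_, a, ha, rfl⟩ ⟨_, b, hb, rfl⟩
    apply Subtype.ext
    exact congrArg (fun h : H => (h : Γ)) (hAc a ha b hb)
end
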